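/- Root multiplicities in the m = 7 row for the simplest rank-2 hyperbolic Kac–Moody algebra: in g(A) with A = [[2,−3],[−3,2]], one has mult(7,3) = 2, mult(7,4) = 9, mult(7,5) = 27, mult(7,6) = 60, mult(7,7) = 107, mult(7,8) = 162, mult(7,9) = 211, mult(7,10) = 240, mult(7,11) = 240, and mult(7,12) = 211. -/

import Mathlib

noncomputable section

open CartanMatrix

/-- A generalized Cartan matrix: `A i i = 2`, off-diagonal entries are non-positive, and
`A i j = 0 ↔ A j i = 0`. -/
def IsGCM {B : Type*} (A : Matrix B B ℤ) : Prop :=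
  (∀ i, A i i = 2) ∧ (∀ i j, i ≠ j → A i j ≤ 0) ∧ (∀ i j, A i j = 0 ↔ A j i = 0)

/-- The images in the Kac–Moody algebra `Matrix.ToLieAlgebra ℚ A` of the generators of the
free Lie algebra. -/
def KMgen {B : Type*} [DecidableEq B] (A : Matrix B B ℤ) (x : Generators B) :
    Matrix.ToLieAlgebra ℚ A :=
  LieSubmodule.Quotient.mk (N := Relations.toIdeal ℚ A) (FreeLieAlgebra.of ℚ x)

/-- The Cartan generator `h i`. -/
def gH {B : Type*} [DecidableEq B] (A : Matrix B B ℤ) (i : B) : Matrix.ToLieAlgebra ℚ A :=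
  KMgen A (Generators.H i)

/-- The raising generator `e i`. -/
def gE {B : Type*} [DecidableEq B] (A : Matrix B B ℤ) (i : B) : Matrix.ToLieAlgebra ℚ A :=
  KMgen A (Generators.E i)

/-- The lowering generator `f i`. -/
def gF {B : Type*} [DecidableEq B] (A : Matrix B B ℤ) (i : B) : Matrix.ToLieAlgebra ℚ A :=
  KMgen A (Generators.F i)

/-- The root space of `g(A)` attached to `n : B → ℤ`: the simultaneous eigenspace of the
adjoint action of the Cartan generators `h i`, with eigenvalues `∑ j, A i j * n j`. -/
def rootSpace {B : Type*} [Fintype B] [DecidableEq B] (A : Matrix B B ℤ) (n : B → ℤ) :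
    Submodule ℚ (Matrix.ToLieAlgebra ℚ A) :=
  ⨅ i, Module.End.eigenspace
    (LieAlgebra.ad ℚ (Matrix.ToLieAlgebra ℚ A) (gH A i)) ((∑ j, A i j * n j : ℤ) : ℚ)

/-- The multiplicity of `n` in `g(A)`: the dimension of the root space. -/
def rootMult {B : Type*} [Fintype B] [DecidableEq B] (A : Matrix B B ℤ) (n : B → ℤ) : ℕ :=
  Module.finrank ℚ (rootSpace A n)

/-- The Cartan matrix of the simplest rank-2 hyperbolic Kac–Moody algebra. -/
def A2hyp : Matrix (Fin 2) (Fin 2) ℤ := !![2, -3; -3, 2]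

attribute [local instance] LieRing.ofAssociativeRing

abbrev KT := MonoidAlgebra ℚ (FreeMonoid (Fin 4))

def wd (w : List (Fin 4)) : KT := MonoidAlgebra.single (FreeMonoid.ofList w) 1
def xx (j : Fin 4) : KT := wd [j]

lemma wd_nil : wd [] = 1 := rfl
lemma wd_cons (j : Fin 4) (w) : wd (j :: w) = xx j * wd w := by
  simp [wd, xx, MonoidAlgebra.single_mul_single]
lemma wd_append (u w) : wd (u ++ w) = wd u * wd w := by
  simp [wd, MonoidAlgebra.single_mul_single, ← FreeMonoid.ofList_append]

lemma kt_span : Submodule.span ℚ (Set.range wd) = ⊤ := by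
  rw [eq_top_iff]
  rintro x -
  induction x using MonoidAlgebra.induction_linear with
  | zero => exact zero_mem _
  | add x y hx hy => exact add_mem hx hy
  | single m r =>
    have : MonoidAlgebra.single m r = r • wd (FreeMonoid.toList m) := by
      simp [wd]
    rw [this]
    exact Submodule.smul_mem _ _ (Submodule.subset_span ⟨_, rfl⟩)

@[elab_as_elim]
lemma kt_induction {P : KT → Prop} (h0 : P 0) (ha : ∀ x y, P x → P y → P (x + y))
    (hs : ∀ (c : ℚ) x, P x → P (c • x)) (hw : ∀ w, P (wd w)) (x : KT) : P x := by
  have hx : x ∈ Submodule.span ℚ (Set.range wd) := by rw [kt_span]; trivial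
  induction hx using Submodule.span_induction with
  | mem x h => obtain ⟨w, rfl⟩ := h; exact hw w
  | zero => exact h0
  | add x y _ _ hx hy => exact ha x y hx hy
  | smul c x _ hx => exact hs c x hx

lemma kt_ext {M : Type*} [AddCommGroup M] [Module ℚ M] {f g : KT →ₗ[ℚ] M}
    (h : ∀ w, f (wd w) = g (wd w)) : f = g := by
  apply LinearMap.ext_on_range kt_span h

/-- linear extension -/
def lin {M : Type*} [AddCommGroup M] [Module ℚ M] (g : List (Fin 4) → M) : KT →ₗ[ℚ] M :=
  (Finsupp.linearCombination ℚ (fun m : FreeMonoid (Fin 4) => g (FreeMonoid.toList m))) ∘ₗ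
    (MonoidAlgebra.coeffLinearEquiv ℚ).toLinearMap

lemma lin_wd {M : Type*} [AddCommGroup M] [Module ℚ M] (g : List (Fin 4) → M) (w) :
    lin g (wd w) = g w := by
  simp [lin, wd]

/-- coefficient functional -/
def co (w : List (Fin 4)) : KT →ₗ[ℚ] ℚ := lin (fun u => if u = w then 1 else 0)
lemma co_wd (w u) : co w (wd u) = if u = w then 1 else 0 := lin_wd _ _

section dynkin
variable {𝔤 : Type*} [LieRing 𝔤] [LieAlgebra ℚ 𝔤] (x : Fin 4 → 𝔤)

def DW : List (Fin 4) → 𝔤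
  | [] => 0
  | [j] => x j
  | j :: k :: w => ⁅x j, DW (k :: w)⁆

lemma DW_cons (j : Fin 4) (w : List (Fin 4)) (hw : w ≠ []) : DW x (j :: w) = ⁅x j, DW x w⁆ := by
  cases w with
  | nil => exact absurd rfl hw
  | cons k w => rfl

def Dy : KT →ₗ[ℚ] 𝔤 := lin (DW x)

lemma Dy_wd (w) : Dy x (wd w) = DW x w := lin_wd _ _

def rho : KT →ₐ[ℚ] Module.End ℚ 𝔤 :=
  MonoidAlgebra.lift ℚ _ _ (FreeMonoid.lift (fun j => LieAlgebra.ad ℚ 𝔤 (x j)))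

lemma rho_xx (j) : rho x (xx j) = LieAlgebra.ad ℚ 𝔤 (x j) := by
  have : FreeMonoid.ofList [j] = FreeMonoid.of j := rfl
  simp [rho, xx, wd, this]

lemma co_nil_mul (a b : KT) : co [] (a * b) = co [] a * co [] b := by
  revert b
  refine kt_induction ?_ ?_ ?_ ?_ a
  · simp
  · intro x y hx hy b; rw [add_mul, map_add, hx, hy, map_add, add_mul]
  · intro c x hx b; simp [hx, mul_assoc]
  · intro u b
    refine kt_induction ?_ ?_ ?_ ?_ b
    · simp
    · intro x y hx hy; rw [mul_add, map_add, hx, hy, map_add, mul_add]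
    · intro c x hx; simp [hx, mul_left_comm]
    · intro w
      rw [← wd_append, co_wd, co_wd, co_wd]
      by_cases h : u = [] <;> by_cases h' : w = [] <;> simp [h, h']

lemma Dy_mul (a b : KT) : Dy x (a * b) = rho x a (Dy x b) + co [] b • Dy x a := by
  revert b
  refine kt_induction ?_ ?_ ?_ ?_ a
  · simp
  · intro y z hy hz b; rw [add_mul, map_add, hy, hz]; simp; abel
  · intro c y hy b; simp [hy]; rw [smul_comm]
  · intro u
    induction u with
    | nil => 
      intro b
      have : Dy x (wd []) = 0 := Dy_wd x []
      rw [this, wd_nil]; simp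
    | cons j u ih =>
      intro b
      rw [wd_cons, mul_assoc]
      refine kt_induction ?_ ?_ ?_ ?_ b
      · simp
      · intro y z hy hz; rw [mul_add, mul_add, map_add, hy, hz]; simp [add_smul]; abel
      · intro c y hy; simp [hy, mul_smul]
      · intro w
        by_cases hw : u ++ w = []
        · obtain ⟨rfl, rfl⟩ := List.append_eq_nil_iff.1 hw
          simp [wd_nil, show Dy x 1 = 0 from Dy_wd x [], show co [] (1 : KT) = 1 from by
            rw [← wd_nil, co_wd]; simp]
        · rw [← wd_append, ← wd_cons, Dy_wd, DW_cons _ _ _ hw, ← Dy_wd x (u ++ w), wd_append, ih]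
          rw [map_mul, rho_xx, Module.End.mul_apply, lie_add, LieAlgebra.ad_apply, lie_smul]
          congr 1
          by_cases hu : u = []
          · subst hu
            have hw' : w ≠ [] := by simpa using hw
            simp [co_wd, hw']
          · rw [← wd_cons, Dy_wd x u, Dy_wd x (j :: u), DW_cons _ _ _ hu]

lemma co_nil_DW (w) : co [] (DW xx w) = 0 := by
  match w with
  | [] => simp [DW]
  | [j] => simp [DW, xx, co_wd]
  | j :: k :: w =>
    rw [DW_cons _ _ _ (by simp), LieRing.of_associative_ring_bracket, map_sub, co_nil_mul,
      co_nil_mul]; ring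

lemma rho_DW (w) : rho x (DW xx w) = LieAlgebra.ad ℚ 𝔤 (DW x w) := by
  match w with
  | [] => simp [DW]
  | [j] => simp [DW, rho_xx]
  | j :: k :: w =>
    rw [DW_cons xx j (k :: w) (by simp), DW_cons x j (k :: w) (by simp), LieRing.of_associative_ring_bracket,
      map_sub, map_mul, map_mul, rho_DW (k :: w), rho_xx, LieHom.map_lie,
      LieRing.of_associative_ring_bracket]

lemma Dy_DW (w) : Dy x (DW xx w) = (w.length : ℚ) • DW x w := by
  match w with
  | [] => simp [DW]
  | [j] => simp [DW, xx, Dy_wd]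
  | j :: k :: w =>
    rw [DW_cons xx j (k :: w) (by simp), LieRing.of_associative_ring_bracket, map_sub, Dy_mul, Dy_mul,
      Dy_DW (k :: w), co_nil_DW, rho_DW, rho_xx, DW_cons x j (k :: w) (by simp)]
    have h1 : Dy x (xx j) = x j := by simp [xx, Dy_wd, DW]
    have h2 : co [] (xx j) = 0 := by simp [xx, co_wd]
    rw [h1, h2]
    simp only [LieAlgebra.ad_apply, zero_smul, add_zero, lie_smul]
    rw [← lie_skew (x j) (DW x (k :: w))]
    simp only [List.length_cons]
    push_cast
    module

lemma Dy_Dy (a : KT) (m : ℕ)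
    (ha : a ∈ Submodule.span ℚ (wd '' {w | w.length = m})) :
    Dy x (Dy xx a) = (m : ℚ) • Dy x a := by
  induction ha using Submodule.span_induction with
  | mem y h => obtain ⟨w, hw, rfl⟩ := h; rw [Dy_wd, Dy_DW, Dy_wd, hw]
  | zero => simp
  | add y z _ _ hy hz => simp [hy, hz]
  | smul c y _ hy => simp [hy]; rw [smul_comm]

end dynkin

/-! derivations -/
def derW (φ : Fin 4 → KT) : List (Fin 4) → KT
  | [] => 0
  | j :: w => φ j * wd w + xx j * derW φ w

def der (φ : Fin 4 → KT) : Module.End ℚ KT := lin (derW φ)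

lemma der_wd (φ) (w) : der φ (wd w) = derW φ w := lin_wd _ _

lemma der_xx (φ) (j) : der φ (xx j) = φ j := by
  rw [xx, der_wd]; simp [derW, wd_nil]

lemma der_one (φ) : der φ 1 = 0 := by rw [← wd_nil, der_wd]; rfl

lemma der_xx_mul (φ) (j) (b : KT) : der φ (xx j * b) = φ j * b + xx j * der φ b := by
  refine kt_induction ?_ ?_ ?_ ?_ b
  · simp
  · intro y z hy hz; simp only [mul_add, map_add, hy, hz]; abel
  · intro c y hy; simp [hy]
  · intro w; rw [← wd_cons, der_wd, der_wd]; rfl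

lemma der_mul (φ) (a b : KT) : der φ (a * b) = der φ a * b + a * der φ b := by
  revert b
  refine kt_induction ?_ ?_ ?_ ?_ a
  · simp
  · intro y z hy hz b; simp only [add_mul, map_add, hy, hz]; abel
  · intro c y hy b; simp [hy]
  · intro u
    induction u with
    | nil => intro b; simp [wd_nil, der_one]
    | cons j u ih =>
      intro b
      rw [wd_cons, mul_assoc, der_xx_mul, ih, der_xx_mul]
      noncomm_ring

lemma der_comm_mul (D : Module.End ℚ KT) (φ : Fin 4 → KT) (h1 : D 1 = 0)
    (hm : ∀ a b, D (a * b) = D a * b + a * D b) (hx : ∀ j, D (xx j) = φ j) : D = der φ := by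
  apply kt_ext
  intro w
  induction w with
  | nil => rw [wd_nil, h1, der_one]
  | cons j w ih => rw [wd_cons, hm, der_mul, ih, hx, der_xx]

lemma der_lie (φ ψ χ : Fin 4 → KT) (h : ∀ j, der φ (ψ j) - der ψ (φ j) = χ j) :
    ⁅der φ, der ψ⁆ = der χ := by
  apply der_comm_mul
  · simp [LieRing.of_associative_ring_bracket, der_one]
  · intro a b
    simp only [LieRing.of_associative_ring_bracket, LinearMap.sub_apply, Module.End.mul_apply,
      der_mul, map_add]
    noncomm_ring
  · intro j
    simp only [LieRing.of_associative_ring_bracket, LinearMap.sub_apply, Module.End.mul_apply,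
      der_xx, h]

lemma Dy_der {𝔤 : Type*} [LieRing 𝔤] [LieAlgebra ℚ 𝔤] (x : Fin 4 → 𝔤) (δ : 𝔤 →ₗ[ℚ] 𝔤)
    (hδ : ∀ a b, δ ⁅a, b⁆ = ⁅δ a, b⁆ + ⁅a, δ b⁆) (c : Fin 4 → ℚ) (s : Fin 4 → Fin 4)
    (hx : ∀ j, δ (x j) = c j • x (s j)) (a : KT) :
    Dy x (der (fun j => c j • xx (s j)) a) = δ (Dy x a) := by
  refine kt_induction ?_ ?_ ?_ ?_ a
  · simp
  · intro y z hy hz; simp [hy, hz]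
  · intro c y hy; simp [hy]
  · intro w
    induction w with
    | nil => rw [wd_nil, der_one, map_zero, ← wd_nil, Dy_wd]; simp [DW]
    | cons j w ih =>
      by_cases hw : w = []
      · subst hw
        rw [← xx, der_xx, map_smul]
        simp [xx, Dy_wd, DW, hx]
      · have hn : co [] (der (fun j => c j • xx (s j)) (wd w)) = 0 := by
          cases w with
          | nil => exact absurd rfl hw
          | cons k w => rw [der_wd, derW]; simp [co_nil_mul, xx, co_wd]
        have hn' : co [] (wd w) = 0 := by simp [co_wd, hw]
        rw [wd_cons, der_xx_mul, map_add, Dy_mul, Dy_mul, Dy_mul, hn, hn', ih, rho_xx]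
        simp [rho_xx, hδ, hx]

/-! operators on the tensor algebra -/
abbrev EK := Module.End ℚ KT

def cE : Fin 4 → ℚ := ![1, 2, 3, 0]
def cF : Fin 4 → ℚ := ![0, 3, 2, 1]
def cH1 : Fin 4 → ℚ := ![2, -1, -4, -7]
def cH2 : Fin 4 → ℚ := ![-3, -1, 1, 3]

def oE2 : EK := der (fun j => cE j • xx (j + 1))
def oF2 : EK := der (fun j => cF j • xx (j - 1))
def oH1 : EK := der (fun j => cH1 j • xx j)
def oH2 : EK := der (fun j => cH2 j • xx j)
def LM (a : KT) : EK := LinearMap.mulLeft ℚ a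
def oE1 : EK := LM (xx 0)
def bet : Fin 4 → EK := ![-oH1, -(3 : ℚ) • oE2, 0, 0]
def f1W : List (Fin 4) → KT
  | [] => 0
  | j :: w => xx j * f1W w + bet j (wd w)
def oF1 : EK := lin f1W

lemma lieE_smul (c : ℚ) (a b : EK) : ⁅a, c • b⁆ = c • ⁅a, b⁆ := by
  simp [LieRing.of_associative_ring_bracket, smul_sub]
lemma smul_lieE (c : ℚ) (a b : EK) : ⁅c • a, b⁆ = c • ⁅a, b⁆ := by
  simp [LieRing.of_associative_ring_bracket, smul_sub]
lemma lieK_smul (c : ℚ) (a b : KT) : ⁅a, c • b⁆ = c • ⁅a, b⁆ := by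
  simp [LieRing.of_associative_ring_bracket, smul_sub]
lemma smul_lieK (c : ℚ) (a b : KT) : ⁅c • a, b⁆ = c • ⁅a, b⁆ := by
  simp [LieRing.of_associative_ring_bracket, smul_sub]
lemma lie_End (a b : EK) (x : KT) : ⁅a, b⁆ x = a (b x) - b (a x) := rfl
lemma LM_apply (a x : KT) : LM a x = a * x := rfl
lemma LM_smul (c : ℚ) (a : KT) : LM (c • a) = c • LM a := by refine LinearMap.ext fun x => ?_; simp [LM]
lemma LM_zero : LM 0 = 0 := by refine LinearMap.ext fun x => ?_; simp [LM]
lemma LM_neg (a : KT) : LM (-a) = -LM a := by refine LinearMap.ext fun x => ?_; simp [LM]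

lemma LM_lie (a b : KT) : ⁅LM a, LM b⁆ = LM ⁅a, b⁆ := by
  refine LinearMap.ext fun x => ?_
  simp [LM_apply, LieRing.of_associative_ring_bracket, sub_mul, mul_assoc]

lemma der_LM (φ) (a : KT) : ⁅der φ, LM a⁆ = LM (der φ a) := by
  refine LinearMap.ext fun x => ?_
  simp [LM_apply, der_mul]

lemma der_smul_fam (c : ℚ) (φ : Fin 4 → KT) : c • der φ = der (fun j => c • φ j) := by
  apply der_comm_mul
  · simp [der_one]
  · intro a b; simp [der_mul]
  · intro j; simp [der_xx]

lemma der_zero_fam : (0 : EK) = der (fun _ => 0) := by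
  apply der_comm_mul <;> simp

lemma oF1_one : oF1 1 = 0 := by rw [← wd_nil, oF1, lin_wd]; rfl
lemma oF1_xx_mul (j) (b : KT) : oF1 (xx j * b) = xx j * oF1 b + bet j b := by
  refine kt_induction ?_ ?_ ?_ ?_ b
  · simp
  · intro y z hy hz; simp only [mul_add, map_add, hy, hz]; abel
  · intro c y hy; simp [hy]
  · intro w; rw [← wd_cons, oF1, lin_wd, lin_wd]; rfl
lemma oF1_LM (j) : ⁅oF1, LM (xx j)⁆ = bet j := by
  refine LinearMap.ext fun x => ?_
  simp [LM_apply, oF1_xx_mul]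

lemma op_zero (Q : EK) (h1 : Q 1 = 0) (h : ∀ j, ⁅Q, LM (xx j)⁆ = 0) : Q = 0 := by
  apply kt_ext
  intro w
  induction w with
  | nil => rw [wd_nil, h1]; rfl
  | cons j w ih =>
    have := congrArg (fun q : EK => q (wd w)) (h j)
    simp only [lie_End, LM_apply, ih, ← wd_cons] at this
    simpa using this

/-- The Chevalley relations -/
lemma rH12 : ⁅oH1, oH2⁆ = 0 := by
  rw [der_zero_fam]; apply der_lie; intro j
  simp [der_xx, smul_smul, mul_comm]
lemma rE2F2 : ⁅oE2, oF2⁆ = oH2 := by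
  apply der_lie; intro j
  fin_cases j <;> simp [der_xx, cE, cF, cH2, smul_smul] <;> try module
lemma rH1E2 : ⁅oH1, oE2⁆ = (-3 : ℚ) • oE2 := by
  rw [oE2, der_smul_fam]
  apply der_lie; intro j
  fin_cases j <;> simp [der_xx, cE, cH1, smul_smul] <;> try module
lemma rH2E2 : ⁅oH2, oE2⁆ = (2 : ℚ) • oE2 := by
  rw [oE2, der_smul_fam]
  apply der_lie; intro j
  fin_cases j <;> simp [der_xx, cE, cH2, smul_smul] <;> try module
lemma rH1F2 : ⁅oH1, oF2⁆ = (3 : ℚ) • oF2 := by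
  rw [oF2, der_smul_fam]
  apply der_lie; intro j
  fin_cases j <;> simp [der_xx, cF, cH1, smul_smul] <;> try module
lemma rH2F2 : ⁅oH2, oF2⁆ = (-2 : ℚ) • oF2 := by
  rw [oF2, der_smul_fam]
  apply der_lie; intro j
  fin_cases j <;> simp [der_xx, cF, cH2, smul_smul] <;> try module
lemma rH1E1 : ⁅oH1, oE1⁆ = (2 : ℚ) • oE1 := by
  rw [oE1, oH1, der_LM, der_xx, LM_smul]; rfl
lemma rH2E1 : ⁅oH2, oE1⁆ = (-3 : ℚ) • oE1 := by
  rw [oE1, oH2, der_LM, der_xx, LM_smul]; rfl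
lemma rE1F2 : ⁅oE1, oF2⁆ = 0 := by
  rw [← lie_skew, oE1, oF2, der_LM, der_xx, LM_smul]; simp [cF]
lemma rE1F1 : ⁅oE1, oF1⁆ = oH1 := by
  rw [← lie_skew, oE1, oF1_LM]; simp [bet]

lemma rH1L (j) : ⁅oH1, LM (xx j)⁆ = cH1 j • LM (xx j) := by
  rw [oH1, der_LM, der_xx, LM_smul]
lemma rH2L (j) : ⁅oH2, LM (xx j)⁆ = cH2 j • LM (xx j) := by
  rw [oH2, der_LM, der_xx, LM_smul]
lemma rE2L (j) : ⁅oE2, LM (xx j)⁆ = cE j • LM (xx (j + 1)) := by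
  rw [oE2, der_LM, der_xx, LM_smul]


lemma bet0 : bet 0 = -oH1 := rfl
lemma bet1 : bet 1 = -(3 : ℚ) • oE2 := rfl
lemma bet2 : bet 2 = 0 := rfl
lemma bet3 : bet 3 = 0 := rfl

lemma rE2F1 : ⁅oE2, oF1⁆ = 0 := by
  apply op_zero
  · simp [LieRing.of_associative_ring_bracket, oF1_one, oE2, der_one]
  · intro j
    rw [lie_lie, rE2L, lieE_smul, oF1_LM, oF1_LM]
    fin_cases j
    · show ⁅oE2, bet 0⁆ - cE 0 • bet 1 = 0
      rw [bet0, lie_neg, lie_skew, rH1E2, bet1]; simp [cE]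
    · show ⁅oE2, bet 1⁆ - cE 1 • bet 2 = 0
      rw [bet1, bet2, lieE_smul]; simp
    · show ⁅oE2, bet 2⁆ - cE 2 • bet 3 = 0
      rw [bet2, bet3]; simp
    · show ⁅oE2, bet 3⁆ - cE 3 • bet 0 = 0
      rw [bet0, bet3]; simp [cE]

lemma rH1F1 : ⁅oH1, oF1⁆ = (-2 : ℚ) • oF1 := by
  rw [← sub_eq_zero]
  apply op_zero
  · simp [LieRing.of_associative_ring_bracket, oF1_one, oH1, der_one]
  · intro j
    rw [sub_lie, lie_lie, rH1L, lieE_smul, smul_lieE, oF1_LM]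
    fin_cases j
    · show ⁅oH1, bet 0⁆ - cH1 0 • bet 0 - (-2 : ℚ) • bet 0 = 0
      rw [bet0, lie_neg, lie_self]; simp [cH1]
    · show ⁅oH1, bet 1⁆ - cH1 1 • bet 1 - (-2 : ℚ) • bet 1 = 0
      rw [bet1, lieE_smul, rH1E2]; simp [cH1]; module
    · show ⁅oH1, bet 2⁆ - cH1 2 • bet 2 - (-2 : ℚ) • bet 2 = 0
      rw [bet2]; simp
    · show ⁅oH1, bet 3⁆ - cH1 3 • bet 3 - (-2 : ℚ) • bet 3 = 0
      rw [bet3]; simp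

lemma rH2F1 : ⁅oH2, oF1⁆ = (3 : ℚ) • oF1 := by
  rw [← sub_eq_zero]
  apply op_zero
  · simp [LieRing.of_associative_ring_bracket, oF1_one, oH2, der_one]
  · intro j
    rw [sub_lie, lie_lie, rH2L, lieE_smul, smul_lieE, oF1_LM]
    fin_cases j
    · show ⁅oH2, bet 0⁆ - cH2 0 • bet 0 - (3 : ℚ) • bet 0 = 0
      rw [bet0, lie_neg, lie_skew, rH12]; simp [cH2]
    · show ⁅oH2, bet 1⁆ - cH2 1 • bet 1 - (3 : ℚ) • bet 1 = 0
      rw [bet1, lieE_smul, rH2E2]; simp [cH2]; module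
    · show ⁅oH2, bet 2⁆ - cH2 2 • bet 2 - (3 : ℚ) • bet 2 = 0
      rw [bet2]; simp
    · show ⁅oH2, bet 3⁆ - cH2 3 • bet 3 - (3 : ℚ) • bet 3 = 0
      rw [bet3]; simp

lemma sl2_string {𝔤 : Type*} [LieRing 𝔤] [LieAlgebra ℚ 𝔤] (e f h y : 𝔤) (hef : ⁅e, f⁆ = h)
    (hhf : ⁅h, f⁆ = (-2 : ℚ) • f) (hey : ⁅e, y⁆ = 0) (hhy : ⁅h, y⁆ = (3 : ℚ) • y) :
    ⁅e, ⁅f, ⁅f, ⁅f, ⁅f, y⁆⁆⁆⁆⁆ = 0 := by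
  have k1 : ⁅h, ⁅f, y⁆⁆ = (1 : ℚ) • ⁅f, y⁆ := by
    rw [leibniz_lie, hhf, hhy, smul_lie, lie_smul]; module
  have k2 : ⁅h, ⁅f, ⁅f, y⁆⁆⁆ = (-1 : ℚ) • ⁅f, ⁅f, y⁆⁆ := by
    rw [leibniz_lie, hhf, k1, smul_lie, lie_smul]; module
  have k3 : ⁅h, ⁅f, ⁅f, ⁅f, y⁆⁆⁆⁆ = (-3 : ℚ) • ⁅f, ⁅f, ⁅f, y⁆⁆⁆ := by
    rw [leibniz_lie, hhf, k2, smul_lie, lie_smul]; module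
  have c1 : ⁅e, ⁅f, y⁆⁆ = (3 : ℚ) • y := by rw [leibniz_lie, hef, hhy, hey]; simp
  have c2 : ⁅e, ⁅f, ⁅f, y⁆⁆⁆ = (4 : ℚ) • ⁅f, y⁆ := by
    rw [leibniz_lie, hef, k1, c1, lie_smul]; module
  have c3 : ⁅e, ⁅f, ⁅f, ⁅f, y⁆⁆⁆⁆ = (3 : ℚ) • ⁅f, ⁅f, y⁆⁆ := by
    rw [leibniz_lie, hef, k2, c2, lie_smul]; module
  rw [leibniz_lie, hef, k3, c3, lie_smul]; module

lemma comm_zero (Q : EK) (h1 : Q 1 = 0) (ha : ⁅oE1, Q⁆ = 0) (hb : ⁅oE2, Q⁆ = 0) : Q = 0 := by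
  have hb' : ⁅Q, oE2⁆ = 0 := by rw [← lie_skew, hb, neg_zero]
  have step : ∀ j, cE j ≠ 0 → ⁅Q, LM (xx j)⁆ = 0 → ⁅Q, LM (xx (j + 1))⁆ = 0 := by
    intro j hj h
    have : ⁅Q, ⁅oE2, LM (xx j)⁆⁆ = 0 := by rw [leibniz_lie, hb', h]; simp
    rw [rE2L, lieE_smul] at this
    exact (smul_eq_zero.1 this).resolve_left hj
  have s0 : ⁅Q, LM (xx 0)⁆ = 0 := by rw [← lie_skew]; exact neg_eq_zero.2 ha
  have s1 : ⁅Q, LM (xx 1)⁆ = 0 := step 0 (by simp [cE]) s0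
  have s2 : ⁅Q, LM (xx 2)⁆ = 0 := step 1 (by simp [cE]) s1
  have s3 : ⁅Q, LM (xx 3)⁆ = 0 := step 2 (by simp [cE]) s2
  apply op_zero _ h1
  intro j
  fin_cases j
  exacts [s0, s1, s2, s3]

lemma lie_skew0 {𝔤 : Type*} [LieRing 𝔤] {a b : 𝔤} (h : ⁅a, b⁆ = 0) : ⁅b, a⁆ = 0 := by
  rw [← lie_skew, h, neg_zero]

lemma serreF12 : ⁅oF1, ⁅oF1, ⁅oF1, ⁅oF1, oF2⁆⁆⁆⁆ = 0 := by
  apply comm_zero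
  · simp [LieRing.of_associative_ring_bracket, oF1_one, oF2, der_one]
  · exact sl2_string oE1 oF1 oH1 oF2 rE1F1 rH1F1 rE1F2 rH1F2
  · have h : ⁅oF1, oH2⁆ = (-3 : ℚ) • oF1 := by rw [← lie_skew, rH2F1]; module
    have k1 : ⁅oE2, ⁅oF1, oF2⁆⁆ = (-3 : ℚ) • oF1 := by rw [leibniz_lie, rE2F1, rE2F2, h]; simp
    have k2 : ⁅oE2, ⁅oF1, ⁅oF1, oF2⁆⁆⁆ = 0 := by
      rw [leibniz_lie, rE2F1, k1, lieE_smul]; simp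
    have k3 : ⁅oE2, ⁅oF1, ⁅oF1, ⁅oF1, oF2⁆⁆⁆⁆ = 0 := by rw [leibniz_lie, rE2F1, k2]; simp
    rw [leibniz_lie, rE2F1, k3]; simp

lemma serreF21 : ⁅oF2, ⁅oF2, ⁅oF2, ⁅oF2, oF1⁆⁆⁆⁆ = 0 := by
  apply comm_zero
  · simp [LieRing.of_associative_ring_bracket, oF1_one, oF2, der_one]
  · have h : ⁅oF2, oH1⁆ = (-3 : ℚ) • oF2 := by rw [← lie_skew, rH1F2]; module
    have k1 : ⁅oE1, ⁅oF2, oF1⁆⁆ = (-3 : ℚ) • oF2 := by rw [leibniz_lie, rE1F2, rE1F1, h]; simp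
    have k2 : ⁅oE1, ⁅oF2, ⁅oF2, oF1⁆⁆⁆ = 0 := by
      rw [leibniz_lie, rE1F2, k1, lieE_smul]; simp
    have k3 : ⁅oE1, ⁅oF2, ⁅oF2, ⁅oF2, oF1⁆⁆⁆⁆ = 0 := by rw [leibniz_lie, rE1F2, k2]; simp
    rw [leibniz_lie, rE1F2, k3]; simp
  · exact sl2_string oE2 oF2 oH2 oF1 rE2F2 rH2F2 rE2F1 rH2F1

lemma serreE21 : ⁅oE2, ⁅oE2, ⁅oE2, ⁅oE2, oE1⁆⁆⁆⁆ = 0 := by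
  have h0 : ⁅oE2, oE1⁆ = cE 0 • LM (xx 1) := rE2L 0
  have h1 : ⁅oE2, LM (xx 1)⁆ = cE 1 • LM (xx 2) := rE2L 1
  have h2 : ⁅oE2, LM (xx 2)⁆ = cE 2 • LM (xx 3) := rE2L 2
  have h3 : ⁅oE2, LM (xx 3)⁆ = cE 3 • LM (xx 0) := rE2L 3
  simp only [h0, h1, h2, h3, lieE_smul]
  simp [cE]

/-! the relators -/
def rr : ℕ → KT
  | 0 => ⁅xx 0, ⁅xx 0, ⁅xx 0, xx 1⁆⁆⁆
  | k + 1 => oE2 (rr k)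

lemma serreE12 : ⁅oE1, ⁅oE1, ⁅oE1, ⁅oE1, oE2⁆⁆⁆⁆ = -LM (rr 0) := by
  have h0 : ⁅oE1, oE2⁆ = -LM (xx 1) := by
    rw [← lie_skew]; congr 1; rw [oE1, rE2L]; simp [cE]
  rw [h0, lie_neg, lie_neg, lie_neg, oE1, LM_lie, LM_lie, LM_lie]
  rfl

lemma oF1_rr (k) : ⁅oF1, LM (rr k)⁆ = 0 := by
  induction k with
  | zero =>
    have := sl2_string oF1 oE1 (-oH1) oE2 (by rw [← lie_skew, rE1F1])
      (by rw [neg_lie, rH1E1]; module) (lie_skew0 rE2F1) (by rw [neg_lie, rH1E2]; module)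
    rw [serreE12, lie_neg] at this
    exact neg_eq_zero.1 this
  | succ k ih =>
    have : LM (rr (k + 1)) = ⁅oE2, LM (rr k)⁆ := by rw [oE2, der_LM]; rfl
    rw [this, leibniz_lie, ih, lie_skew0 rE2F1]; simp

lemma der_bracket (φ) (a b : KT) : der φ ⁅a, b⁆ = ⁅der φ a, b⁆ + ⁅a, der φ b⁆ := by
  simp only [LieRing.of_associative_ring_bracket, map_sub, der_mul]; abel

lemma oH2_rr (k : ℕ) : oH2 (rr k) = (-10 + 2 * k : ℚ) • rr k := by
  induction k with
  | zero =>
    simp only [rr, oH2, der_bracket, der_xx, smul_lieK, lieK_smul, lie_add]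
    rw [show cH2 0 = -3 from rfl, show cH2 1 = -1 from rfl]; push_cast; module
  | succ k ih =>
    have := congrArg (fun q : EK => q (rr k)) rH2E2
    simp only [lie_End, ih, LinearMap.smul_apply, map_smul] at this
    rw [rr, sub_eq_iff_eq_add.1 this]; push_cast; module

lemma oH1_rr (k : ℕ) : oH1 (rr k) = (5 - 3 * k : ℚ) • rr k := by
  induction k with
  | zero =>
    simp only [rr, oH1, der_bracket, der_xx, smul_lieK, lieK_smul, lie_add]
    rw [show cH1 0 = 2 from rfl, show cH1 1 = -1 from rfl]; push_cast; module
  | succ k ih =>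
    have := congrArg (fun q : EK => q (rr k)) rH1E2
    simp only [lie_End, ih, LinearMap.smul_apply, map_smul] at this
    rw [rr, sub_eq_iff_eq_add.1 this]; push_cast; module

lemma oF2_rr (k : ℕ) : oF2 (rr 0) = 0 ∧ ∃ c : ℚ, oF2 (rr (k + 1)) = c • rr k := by
  have h0 : oF2 (rr 0) = 0 := by
    simp only [rr, oF2, der_bracket, der_xx, smul_lieK, lieK_smul, cF]
    simp
  refine ⟨h0, ?_⟩
  induction k with
  | zero =>
    have := congrArg (fun q : EK => q (rr 0)) rE2F2
    simp only [lie_End, h0, oH2_rr, map_zero, zero_sub] at this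
    exact ⟨_, by
      show oF2 (oE2 (rr 0)) = _
      rw [neg_eq_iff_eq_neg.1 this, ← neg_smul]⟩
  | succ k ih =>
    obtain ⟨c, hc⟩ := ih
    have := congrArg (fun q : EK => q (rr (k + 1))) rE2F2
    simp only [lie_End, hc, oH2_rr, map_smul] at this
    refine ⟨c - (-10 + 2 * (k + 1 : ℕ)), ?_⟩
    show oF2 (oE2 (rr (k + 1))) = _
    rw [sub_smul, ← this]
    show _ = c • rr (k + 1) - (c • rr (k + 1) - _)
    abel

/-! the two-sided ideal generated by the relators -/
def II : Submodule ℚ KT := Submodule.span ℚ {z | ∃ a k b, z = a * rr k * b}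

lemma II_mul_left (a : KT) {z : KT} (hz : z ∈ II) : a * z ∈ II := by
  unfold II at hz
  induction hz using Submodule.span_induction with
  | mem y h =>
    obtain ⟨b, k, c, rfl⟩ := h
    exact Submodule.subset_span ⟨a * b, k, c, by simp [mul_assoc]⟩
  | zero => simp
  | add y z _ _ hy hz => rw [mul_add]; exact add_mem hy hz
  | smul c y _ hy => rw [mul_smul_comm]; exact Submodule.smul_mem _ _ hy

lemma II_mul_right (a : KT) {z : KT} (hz : z ∈ II) : z * a ∈ II := by
  unfold II at hz
  induction hz using Submodule.span_induction with
  | mem y h =>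
    obtain ⟨b, k, c, rfl⟩ := h
    exact Submodule.subset_span ⟨b, k, c * a, by simp [mul_assoc]⟩
  | zero => simp
  | add y z _ _ hy hz => rw [add_mul]; exact add_mem hy hz
  | smul c y _ hy => rw [smul_mul_assoc]; exact Submodule.smul_mem _ _ hy

lemma rr_mem (k) : rr k ∈ II := Submodule.subset_span ⟨1, k, 1, by simp⟩

lemma II_map (Q : EK) (h : ∀ a k b, Q (a * rr k * b) ∈ II) {z : KT} (hz : z ∈ II) : Q z ∈ II := by
  unfold II at hz
  induction hz using Submodule.span_induction with
  | mem y h' => obtain ⟨b, k, c, rfl⟩ := h'; exact h _ _ _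
  | zero => simp
  | add y z _ _ hy hz => rw [map_add]; exact add_mem hy hz
  | smul c y _ hy => rw [map_smul]; exact Submodule.smul_mem _ _ hy

lemma II_der (φ) (h : ∀ k, der φ (rr k) ∈ II) {z : KT} (hz : z ∈ II) : der φ z ∈ II := by
  refine II_map _ ?_ hz
  intro a k b
  rw [der_mul, der_mul]
  exact add_mem (II_mul_right _ (add_mem (II_mul_left _ (rr_mem k)) (II_mul_left _ (h k))))
    (II_mul_right _ (II_mul_left _ (rr_mem k)))

lemma II_E2 {z : KT} (hz : z ∈ II) : oE2 z ∈ II := II_der _ (fun k => rr_mem (k + 1)) hz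
lemma II_H1 {z : KT} (hz : z ∈ II) : oH1 z ∈ II :=
  II_der _ (fun k => by
    have := oH1_rr k
    rw [oH1] at this; rw [this]; exact Submodule.smul_mem _ _ (rr_mem k)) hz
lemma II_H2 {z : KT} (hz : z ∈ II) : oH2 z ∈ II :=
  II_der _ (fun k => by
    have := oH2_rr k
    rw [oH2] at this; rw [this]; exact Submodule.smul_mem _ _ (rr_mem k)) hz
lemma II_F2 {z : KT} (hz : z ∈ II) : oF2 z ∈ II :=
  II_der _ (fun k => by
    cases k with
    | zero =>
      have := (oF2_rr 0).1
      rw [oF2] at this; rw [this]; exact zero_mem _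
    | succ k =>
      obtain ⟨c, this⟩ := (oF2_rr k).2
      rw [oF2] at this; rw [this]; exact Submodule.smul_mem _ _ (rr_mem k)) hz
lemma II_E1 {z : KT} (hz : z ∈ II) : oE1 z ∈ II := II_mul_left _ hz
lemma II_bet (j) {z : KT} (hz : z ∈ II) : bet j z ∈ II := by
  fin_cases j
  · exact neg_mem (II_H1 hz)
  · exact Submodule.smul_mem _ _ (II_E2 hz)
  · exact zero_mem _
  · exact zero_mem _
lemma II_F1 {z : KT} (hz : z ∈ II) : oF1 z ∈ II := by
  refine II_map _ ?_ hz
  intro a k b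
  refine kt_induction ?_ ?_ ?_ ?_ a
  · simp
  · intro y z hy hz; simp only [add_mul, map_add]; exact add_mem hy hz
  · intro c y hy; simp only [smul_mul_assoc, map_smul]; exact Submodule.smul_mem _ _ hy
  · intro w
    induction w with
    | nil =>
      have := congrArg (fun q : EK => q b) (oF1_rr k)
      simp only [lie_End, LM_apply, LinearMap.zero_apply, sub_eq_zero] at this
      rw [wd_nil, one_mul, this]
      exact II_mul_right _ (rr_mem k)
    | cons j w ih =>
      rw [wd_cons, mul_assoc, mul_assoc, oF1_xx_mul, ← mul_assoc (wd w)]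
      exact add_mem (II_mul_left _ ih) (II_bet _ (II_mul_right _ (II_mul_left _ (rr_mem k))))

/-! the representation of the free Lie algebra -/
abbrev FL := FreeLieAlgebra ℚ (Generators (Fin 2))
abbrev KM := Matrix.ToLieAlgebra ℚ A2hyp

def genOp : Generators (Fin 2) → EK
  | .H i => ![oH1, oH2] i
  | .E i => ![oE1, oE2] i
  | .F i => ![oF1, oF2] i

lemma genOp_II (g) {z : KT} (hz : z ∈ II) : genOp g z ∈ II := by
  rcases g with i | i | i <;> fin_cases i
  exacts [II_H1 hz, II_H2 hz, II_E1 hz, II_E2 hz, II_F1 hz, II_F2 hz]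

def Psi : FL →ₗ⁅ℚ⁆ EK := FreeLieAlgebra.lift ℚ genOp

def presII : LieSubalgebra ℚ EK where
  carrier := {Q | ∀ z ∈ II, Q z ∈ II}
  add_mem' := fun ha hb z hz => add_mem (ha z hz) (hb z hz)
  zero_mem' := fun z _ => zero_mem _
  smul_mem' := fun c Q h z hz => Submodule.smul_mem _ _ (h z hz)
  lie_mem' := fun {a b} ha hb z hz => sub_mem (ha _ (hb z hz)) (hb _ (ha z hz))

lemma Psi_pres (y : FL) {z : KT} (hz : z ∈ II) : Psi y z ∈ II := by
  let P : FL →ₗ⁅ℚ⁆ presII := FreeLieAlgebra.lift ℚ (fun g => ⟨genOp g, fun z hz => genOp_II g hz⟩)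
  have : Psi = presII.incl.comp P := by
    apply FreeLieAlgebra.hom_ext
    intro g
    simp [Psi, P]
  rw [this]
  exact (P y).2 z hz

def KK : LieIdeal ℚ FL where
  carrier := {y | ∀ z, Psi y z ∈ II}
  add_mem' := fun ha hb z => by rw [map_add]; exact add_mem (ha z) (hb z)
  zero_mem' := fun z => by rw [map_zero]; exact zero_mem _
  smul_mem' := fun c y h z => by rw [map_smul]; exact Submodule.smul_mem _ _ (h z)
  lie_mem := fun {a b} hb z => by
    rw [LieHom.map_lie]
    exact sub_mem (Psi_pres a (hb z)) (hb _)

lemma Psi_of (g) : Psi (FreeLieAlgebra.of ℚ g) = genOp g := FreeLieAlgebra.lift_of_apply _ _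

lemma mem_KK_of_zero {y : FL} (h : Psi y = 0) : y ∈ KK := fun z => by rw [h]; exact zero_mem _

lemma rel_sub : Relations.toSet ℚ A2hyp ⊆ (KK : Set FL) := by
  have e1 : A2hyp 0 0 = 2 := rfl
  have e2 : A2hyp 0 1 = -3 := rfl
  have e3 : A2hyp 1 0 = -3 := rfl
  have e4 : A2hyp 1 1 = 2 := rfl
  have t2 : (-2 : ℤ).toNat = 0 := rfl
  have t3 : (- -3 : ℤ).toNat = 3 := rfl
  have hE0 : Psi (FreeLieAlgebra.of ℚ (.E 0)) = oE1 := Psi_of _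
  have hE1 : Psi (FreeLieAlgebra.of ℚ (.E 1)) = oE2 := Psi_of _
  have hF0 : Psi (FreeLieAlgebra.of ℚ (.F 0)) = oF1 := Psi_of _
  have hF1 : Psi (FreeLieAlgebra.of ℚ (.F 1)) = oF2 := Psi_of _
  have hH0 : Psi (FreeLieAlgebra.of ℚ (.H 0)) = oH1 := Psi_of _
  have hH1 : Psi (FreeLieAlgebra.of ℚ (.H 1)) = oH2 := Psi_of _
  rintro y (((((⟨⟨i, j⟩, rfl⟩ | ⟨⟨i, j⟩, rfl⟩) | ⟨⟨i, j⟩, rfl⟩) | ⟨⟨i, j⟩, rfl⟩) |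
    ⟨⟨i, j⟩, rfl⟩) | ⟨⟨i, j⟩, rfl⟩)
  · apply mem_KK_of_zero
    fin_cases i <;> fin_cases j <;>
      simp [Relations.HH, Function.uncurry, hH0, hH1, rH12, lie_skew0 rH12]
  · apply mem_KK_of_zero
    fin_cases i <;> fin_cases j <;>
      simp [Relations.EF, Function.uncurry, hH0, hH1, hE0, hE1, hF0, hF1,
        rE1F1, rE1F2, rE2F1, rE2F2]
  · apply mem_KK_of_zero
    fin_cases i <;> fin_cases j <;>
      simp [-zsmul_eq_mul, Relations.HE, Function.uncurry, hH0, hH1, hE0, hE1, e1, e2, e3, e4,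
        rH1E1, rH1E2, rH2E1, rH2E2] <;>
      module
  · apply mem_KK_of_zero
    fin_cases i <;> fin_cases j <;>
      simp [-zsmul_eq_mul, Relations.HF, Function.uncurry, hH0, hH1, hF0, hF1, e1, e2, e3, e4,
        rH1F1, rH1F2, rH2F1, rH2F2] <;>
      module
  · have c1 : Relations.adE ℚ A2hyp (0, 0) = 0 := by
      simp [Relations.adE, Function.uncurry, e1, t2]
    have c2 : Relations.adE ℚ A2hyp (1, 1) = 0 := by
      simp [Relations.adE, Function.uncurry, e4, t2]
    have c3 : Psi (Relations.adE ℚ A2hyp (1, 0)) = 0 := by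
      simp only [Relations.adE, Function.uncurry, e3, t3, pow_succ, pow_zero, one_mul,
        Module.End.mul_apply, LieAlgebra.ad_apply, LieHom.map_lie, Function.comp, hE0, hE1]
      exact serreE21
    have c4 : Psi (Relations.adE ℚ A2hyp (0, 1)) = -LM (rr 0) := by
      simp only [Relations.adE, Function.uncurry, e2, t3, pow_succ, pow_zero, one_mul,
        Module.End.mul_apply, LieAlgebra.ad_apply, LieHom.map_lie, Function.comp, hE0, hE1]
      exact serreE12
    fin_cases i <;> fin_cases j
    · show Relations.adE ℚ A2hyp (0, 0) ∈ KK
      rw [c1]; exact zero_mem _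
    · show Relations.adE ℚ A2hyp (0, 1) ∈ KK
      intro z
      rw [c4]
      exact neg_mem (II_mul_right z (rr_mem 0))
    · exact mem_KK_of_zero c3
    · show Relations.adE ℚ A2hyp (1, 1) ∈ KK
      rw [c2]; exact zero_mem _
  · have c1 : Relations.adF ℚ A2hyp (0, 0) = 0 := by
      simp [Relations.adF, Function.uncurry, e1, t2]
    have c2 : Relations.adF ℚ A2hyp (1, 1) = 0 := by
      simp [Relations.adF, Function.uncurry, e4, t2]
    have c3 : Psi (Relations.adF ℚ A2hyp (1, 0)) = 0 := by
      simp only [Relations.adF, Function.uncurry, e3, t3, pow_succ, pow_zero, one_mul,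
        Module.End.mul_apply, LieAlgebra.ad_apply, LieHom.map_lie, Function.comp, hF0, hF1]
      exact serreF21
    have c4 : Psi (Relations.adF ℚ A2hyp (0, 1)) = 0 := by
      simp only [Relations.adF, Function.uncurry, e2, t3, pow_succ, pow_zero, one_mul,
        Module.End.mul_apply, LieAlgebra.ad_apply, LieHom.map_lie, Function.comp, hF0, hF1]
      exact serreF12
    fin_cases i <;> fin_cases j
    · show Relations.adF ℚ A2hyp (0, 0) ∈ KK
      rw [c1]; exact zero_mem _
    · exact mem_KK_of_zero c4
    · exact mem_KK_of_zero c3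
    · show Relations.adF ℚ A2hyp (1, 1) ∈ KK
      rw [c2]; exact zero_mem _

lemma ideal_le : Relations.toIdeal ℚ A2hyp ≤ KK := LieSubmodule.lieSpan_le.2 rel_sub

/-- quotient map -/
def qm : FL →ₗ⁅ℚ⁆ KM where
  toFun y := LieSubmodule.Quotient.mk (N := Relations.toIdeal ℚ A2hyp) y
  map_add' _ _ := rfl
  map_smul' _ _ := rfl
  map_lie' := rfl

lemma qm_surj : Function.Surjective qm := Quot.mk_surjective
lemma qm_zero (y : FL) : qm y = 0 ↔ y ∈ Relations.toIdeal ℚ A2hyp :=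
  LieSubmodule.Quotient.mk_eq_zero' (N := Relations.toIdeal ℚ A2hyp)
lemma qm_of (g) : qm (FreeLieAlgebra.of ℚ g) = KMgen A2hyp g := rfl

def ffE (i : Fin 2) : FL := FreeLieAlgebra.of ℚ (.E i)
def xF : Fin 4 → FL :=
  ![ffE 0, ⁅ffE 1, ffE 0⁆, (1 / 2 : ℚ) • ⁅ffE 1, ⁅ffE 1, ffE 0⁆⁆,
    (1 / 6 : ℚ) • ⁅ffE 1, ⁅ffE 1, ⁅ffE 1, ffE 0⁆⁆⁆]
def xg (j : Fin 4) : KM := qm (xF j)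

lemma Psi_xF (j) : Psi (xF j) = LM (xx j) := by
  have hE0 : Psi (ffE 0) = LM (xx 0) := Psi_of _
  have hE1 : Psi (ffE 1) = oE2 := Psi_of _
  have h0 : ⁅oE2, LM (xx 0)⁆ = cE 0 • LM (xx 1) := rE2L 0
  have h1 : ⁅oE2, LM (xx 1)⁆ = cE 1 • LM (xx 2) := rE2L 1
  have h2 : ⁅oE2, LM (xx 2)⁆ = cE 2 • LM (xx 3) := rE2L 2
  have d0 : cE 0 = 1 := rfl
  have d1 : cE 1 = 2 := rfl
  have d2 : cE 2 = 3 := rfl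
  fin_cases j
  · exact hE0
  · show Psi ⁅ffE 1, ffE 0⁆ = LM (xx 1)
    rw [LieHom.map_lie, hE0, hE1, h0, d0, one_smul]
  · show Psi ((1 / 2 : ℚ) • ⁅ffE 1, ⁅ffE 1, ffE 0⁆⁆) = LM (xx 2)
    rw [map_smul, LieHom.map_lie, LieHom.map_lie, hE0, hE1, h0, lieE_smul, h1, d0, d1]; module
  · show Psi ((1 / 6 : ℚ) • ⁅ffE 1, ⁅ffE 1, ⁅ffE 1, ffE 0⁆⁆⁆) = LM (xx 3)
    rw [map_smul, LieHom.map_lie, LieHom.map_lie, LieHom.map_lie, hE0, hE1, h0, lieE_smul, h1,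
      lieE_smul, lieE_smul, h2, d0, d1, d2]; module

lemma DW_map {L L' : Type*} [LieRing L] [LieAlgebra ℚ L] [LieRing L'] [LieAlgebra ℚ L']
    (φ : L →ₗ⁅ℚ⁆ L') (x : Fin 4 → L) (w) : φ (DW x w) = DW (fun j => φ (x j)) w := by
  match w with
  | [] => simp [DW]
  | [j] => simp [DW]
  | j :: k :: w =>
    rw [DW_cons x j (k :: w) (by simp), DW_cons _ j (k :: w) (by simp), LieHom.map_lie,
      DW_map φ x (k :: w)]

lemma Dy_map {L L' : Type*} [LieRing L] [LieAlgebra ℚ L] [LieRing L'] [LieAlgebra ℚ L']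
    (φ : L →ₗ⁅ℚ⁆ L') (x : Fin 4 → L) (a) : φ (Dy x a) = Dy (fun j => φ (x j)) a := by
  refine kt_induction ?_ ?_ ?_ ?_ a
  · simp
  · intro y z hy hz; simp [hy, hz]
  · intro c y hy; simp [hy]
  · intro w; rw [Dy_wd, Dy_wd, DW_map]

lemma DW_LM (w) : DW (fun j => LM (xx j)) w = LM (DW xx w) := by
  match w with
  | [] => simp [DW, LM_zero]
  | [j] => simp [DW]
  | j :: k :: w =>
    rw [DW_cons _ j (k :: w) (by simp), DW_cons xx j (k :: w) (by simp), ← LM_lie,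
      DW_LM (k :: w)]

/-- the key kernel fact -/
lemma ker_mem (a : KT) (h : Dy xg a = 0) : Dy xx a ∈ II := by
  have h1 : qm (Dy xF a) = 0 := by rw [Dy_map]; exact h
  have h2 : Dy xF a ∈ KK := ideal_le ((qm_zero _).1 h1)
  have h3 : ∀ a, Psi (Dy xF a) = LM (Dy xx a) := by
    intro a
    refine kt_induction ?_ ?_ ?_ ?_ a
    · simp [LM_zero]
    · intro y z hy hz; rw [map_add, map_add, hy, hz, map_add]
      exact LinearMap.ext fun x => by simp [LM_apply, add_mul]
    · intro c y hy; rw [map_smul, map_smul, hy, map_smul, LM_smul]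
    · intro w
      rw [Dy_map, Dy_wd, Dy_wd, ← DW_LM]
      simp only [Psi_xF]
  have := h2 1
  rw [h3, LM_apply, mul_one] at this
  exact this

/-! relations in the Kac-Moody algebra -/
lemma qm_rel {y : FL} (h : y ∈ Relations.toSet ℚ A2hyp) : qm y = 0 :=
  (qm_zero y).2 (LieSubmodule.subset_lieSpan h)

abbrev kE (i : Fin 2) : KM := gE A2hyp i
abbrev kF (i : Fin 2) : KM := gF A2hyp i
abbrev kH (i : Fin 2) : KM := gH A2hyp i

lemma gHH (i j) : ⁅kH i, kH j⁆ = 0 :=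
  qm_rel (y := Relations.HH ℚ (i, j)) (by simp [Relations.toSet])
lemma gEF (i j) : ⁅kE i, kF j⁆ = if i = j then kH i else 0 := by
  have h := qm_rel (y := Relations.EF ℚ (i, j)) (by simp [Relations.toSet])
  simp only [Relations.EF, Function.uncurry] at h
  split_ifs at h ⊢ with hij
  · subst hij
    rw [map_sub] at h
    exact sub_eq_zero.1 h
  · exact h
lemma gHE (i j) : ⁅kH i, kE j⁆ = (A2hyp i j : ℚ) • kE j := by
  have h := qm_rel (y := Relations.HE ℚ A2hyp (i, j)) (by simp [Relations.toSet])
  simp only [Relations.HE, Function.uncurry] at h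
  rw [map_sub, map_zsmul] at h
  rw [Int.cast_smul_eq_zsmul]
  exact sub_eq_zero.1 h
lemma gHF (i j) : ⁅kH i, kF j⁆ = (-A2hyp i j : ℚ) • kF j := by
  have h := qm_rel (y := Relations.HF ℚ A2hyp (i, j)) (by simp [Relations.toSet])
  simp only [Relations.HF, Function.uncurry] at h
  rw [map_add, map_zsmul] at h
  rw [neg_smul, Int.cast_smul_eq_zsmul]
  exact eq_neg_of_add_eq_zero_left h

lemma gE01 : ⁅kE 0, ⁅kE 0, ⁅kE 0, ⁅kE 0, kE 1⁆⁆⁆⁆ = 0 := by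
  have h := qm_rel (y := Relations.adE ℚ A2hyp (0, 1)) (by simp [Relations.toSet])
  have e2 : A2hyp 0 1 = -3 := rfl
  have t3 : (- -3 : ℤ).toNat = 3 := rfl
  simp only [Relations.adE, Function.uncurry, e2, t3, pow_succ, pow_zero, one_mul,
        Module.End.mul_apply, LieAlgebra.ad_apply, LieHom.map_lie, Function.comp] at h
  exact h
lemma gE10 : ⁅kE 1, ⁅kE 1, ⁅kE 1, ⁅kE 1, kE 0⁆⁆⁆⁆ = 0 := by
  have h := qm_rel (y := Relations.adE ℚ A2hyp (1, 0)) (by simp [Relations.toSet])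
  have e2 : A2hyp 1 0 = -3 := rfl
  have t3 : (- -3 : ℤ).toNat = 3 := rfl
  simp only [Relations.adE, Function.uncurry, e2, t3, pow_succ, pow_zero, one_mul,
        Module.End.mul_apply, LieAlgebra.ad_apply, LieHom.map_lie, Function.comp] at h
  exact h

lemma xg0 : xg 0 = kE 0 := rfl
lemma xg1 : xg 1 = ⁅kE 1, kE 0⁆ := rfl
lemma xg2 : xg 2 = (1 / 2 : ℚ) • ⁅kE 1, xg 1⁆ := rfl
lemma xg3 : xg 3 = (1 / 3 : ℚ) • ⁅kE 1, xg 2⁆ := by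
  rw [xg2, lie_smul, smul_smul, show (1 / 3 * (1 / 2) : ℚ) = 1 / 6 by norm_num]; rfl

lemma gE1x (j) : ⁅kE 1, xg j⁆ = cE j • xg (j + 1) := by
  fin_cases j
  · show ⁅kE 1, xg 0⁆ = (1 : ℚ) • xg 1
    rw [xg0, xg1, one_smul]
  · show ⁅kE 1, xg 1⁆ = (2 : ℚ) • xg 2
    rw [xg2]; module
  · show ⁅kE 1, xg 2⁆ = (3 : ℚ) • xg 3
    rw [xg3]; module
  · show ⁅kE 1, xg 3⁆ = (0 : ℚ) • xg 0
    rw [xg3, lie_smul, xg2, lie_smul, lie_smul, xg1, gE10]; simp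

/-- weights of letters -/
def lw (i : Fin 2) (j : Fin 4) : ℚ := A2hyp i 0 + A2hyp i 1 * (j : ℕ)

lemma lw0 (j) : lw 0 j = cH1 j := by
  fin_cases j <;> norm_num [lw, cH1, A2hyp]
lemma lw1 (j) : lw 1 j = cH2 j := by
  fin_cases j <;> norm_num [lw, cH2, A2hyp]

lemma gHx (i j) : ⁅kH i, xg j⁆ = lw i j • xg j := by
  have k0 : ⁅kH i, xg 0⁆ = lw i 0 • xg 0 := by
    rw [xg0, gHE, lw]; simp
  have k1 : ⁅kH i, xg 1⁆ = lw i 1 • xg 1 := by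
    rw [xg1, leibniz_lie, gHE, gHE, smul_lie, lie_smul, lw, ← add_smul]; simp [add_comm]
  have k2 : ⁅kH i, xg 2⁆ = lw i 2 • xg 2 := by
    rw [xg2, lie_smul, leibniz_lie, gHE, k1, smul_lie, lie_smul, ← add_smul, lw, lw, smul_comm]
    congr 1; simp; ring
  have k3 : ⁅kH i, xg 3⁆ = lw i 3 • xg 3 := by
    rw [xg3, lie_smul, leibniz_lie, gHE, k2, smul_lie, lie_smul, ← add_smul, lw, lw, smul_comm]
    congr 1; simp; ring
  fin_cases j
  exacts [k0, k1, k2, k3]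

lemma gFE (i j) : ⁅kF i, kE j⁆ = if j = i then - kH j else 0 := by
  rw [← lie_skew, gEF]; split_ifs <;> simp

lemma gF1x (j) : ⁅kF 1, xg j⁆ = cF j • xg (j - 1) := by
  have k0 : ⁅kF 1, xg 0⁆ = 0 := by rw [xg0, gFE]; simp
  have k1 : ⁅kF 1, xg 1⁆ = (3 : ℚ) • xg 0 := by
    rw [xg1, leibniz_lie, gFE, if_pos rfl, ← xg0, k0, neg_lie, gHx, lw1]
    simp [cH2]
  have k2 : ⁅kF 1, xg 2⁆ = (2 : ℚ) • xg 1 := by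
    rw [xg2, lie_smul, leibniz_lie, gFE, if_pos rfl, k1, neg_lie, gHx, lw1, lie_smul, gE1x]
    simp [cH2, cE]; module
  have k3 : ⁅kF 1, xg 3⁆ = (1 : ℚ) • xg 2 := by
    rw [xg3, lie_smul, leibniz_lie, gFE, if_pos rfl, k2, neg_lie, gHx, lw1, lie_smul, gE1x]
    rw [show cH2 2 = 1 from rfl, show cE 1 = 2 from rfl, show (1 : Fin 4) + 1 = 2 from rfl]; module
  fin_cases j
  · rw [show cF _ = 0 from rfl, zero_smul]; exact k0
  exacts [k1, k2, k3]

def gbet : Fin 4 → KM := ![-kH 0, -(3 : ℚ) • kE 1, 0, 0]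
lemma gF0x (j) : ⁅kF 0, xg j⁆ = gbet j := by
  have k0 : ⁅kF 0, xg 0⁆ = -kH 0 := by rw [xg0, gFE]; simp
  have k1 : ⁅kF 0, xg 1⁆ = -(3 : ℚ) • kE 1 := by
    rw [xg1, leibniz_lie, gFE, if_neg (by simp), ← xg0, k0, lie_neg, lie_skew, gHE]
    simp [A2hyp]
  have k2 : ⁅kF 0, xg 2⁆ = 0 := by
    rw [xg2, lie_smul, leibniz_lie, gFE, if_neg (by simp), k1, lie_smul]; simp
  have k3 : ⁅kF 0, xg 3⁆ = 0 := by
    rw [xg3, lie_smul, leibniz_lie, gFE, if_neg (by simp), k2]; simp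
  fin_cases j
  exacts [k0, k1, k2, k3]

lemma ad_leib (y : KM) (a b : KM) : LieAlgebra.ad ℚ KM y ⁅a, b⁆ =
    ⁅LieAlgebra.ad ℚ KM y a, b⁆ + ⁅a, LieAlgebra.ad ℚ KM y b⁆ := by simp

lemma Dy_E2 (a : KT) : Dy xg (oE2 a) = ⁅kE 1, Dy xg a⁆ :=
  Dy_der xg (LieAlgebra.ad ℚ KM (kE 1)) (ad_leib _) cE (fun j => j + 1) gE1x a
lemma Dy_F2 (a : KT) : Dy xg (oF2 a) = ⁅kF 1, Dy xg a⁆ :=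
  Dy_der xg (LieAlgebra.ad ℚ KM (kF 1)) (ad_leib _) cF (fun j => j - 1) gF1x a
lemma Dy_H (i) (a : KT) : Dy xg (der (fun j => lw i j • xx j) a) = ⁅kH i, Dy xg a⁆ :=
  Dy_der xg (LieAlgebra.ad ℚ KM (kH i)) (ad_leib _) (lw i) (fun j => j) (gHx i) a

lemma Dy_rr (k) : Dy xg (rr k) = 0 := by
  induction k with
  | zero =>
    have : rr 0 = DW xx [0, 0, 0, 1] := rfl
    rw [this, Dy_DW]
    have : DW xg [0, 0, 0, 1] = ⁅xg 0, ⁅xg 0, ⁅xg 0, xg 1⁆⁆⁆ := rfl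
    rw [this, xg1, xg0, ← lie_skew (kE 1) (kE 0), lie_neg, lie_neg, lie_neg, gE01]; simp
  | succ k ih => rw [rr, Dy_E2, ih, lie_zero]

/-! spanning set -/
def FW (i : Fin 2) : List (Fin 2) → KM
  | [] => kF i
  | j :: w => ⁅kF j, FW i w⁆

def fwt (a i : Fin 2) : List (Fin 2) → ℚ
  | [] => -A2hyp a i
  | j :: w => -A2hyp a j + fwt a i w

lemma gH_FW (a i w) : ⁅kH a, FW i w⁆ = fwt a i w • FW i w := by
  induction w with
  | nil => exact gHF a i
  | cons j w ih => rw [FW, leibniz_lie, gHF, ih, smul_lie, lie_smul, ← add_smul]; rfl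

def NN : Submodule ℚ KM := Submodule.span ℚ {z | ∃ i w, z = FW i w}
def HHs : Submodule ℚ KM := Submodule.span ℚ (Set.range kH)
def PP : Submodule ℚ KM := LinearMap.range (Dy xg)
def E1s : Submodule ℚ KM := Submodule.span ℚ {kE 1}
def SS : Submodule ℚ KM := (PP ⊔ E1s) ⊔ (HHs ⊔ NN)

lemma lie_span {L : Type*} [LieRing L] [LieAlgebra ℚ L] (y : L) (Z : Set L) (T : Submodule ℚ L)
    (h : ∀ z ∈ Z, ⁅y, z⁆ ∈ T) {z : L} (hz : z ∈ Submodule.span ℚ Z) : ⁅y, z⁆ ∈ T := by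
  induction hz using Submodule.span_induction with
  | mem z hz => exact h z hz
  | zero => simp
  | add a b _ _ ha hb => rw [lie_add]; exact add_mem ha hb
  | smul c a _ ha => rw [lie_smul]; exact Submodule.smul_mem _ _ ha

lemma lie_sup {L : Type*} [LieRing L] [LieAlgebra ℚ L] (y : L) (A B T : Submodule ℚ L)
    (hA : ∀ z ∈ A, ⁅y, z⁆ ∈ T) (hB : ∀ z ∈ B, ⁅y, z⁆ ∈ T) : ∀ z ∈ A ⊔ B, ⁅y, z⁆ ∈ T := by
  intro z hz
  obtain ⟨a, ha, b, hb, rfl⟩ := Submodule.mem_sup.1 hz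
  rw [lie_add]; exact add_mem (hA a ha) (hB b hb)

lemma PP_SS : PP ≤ SS := le_sup_left.trans le_sup_left
lemma E1s_SS : E1s ≤ SS := le_sup_right.trans le_sup_left
lemma HHs_SS : HHs ≤ SS := le_sup_left.trans le_sup_right
lemma NN_SS : NN ≤ SS := le_sup_right.trans le_sup_right

lemma kH_mem (i) : kH i ∈ HHs := Submodule.subset_span ⟨i, rfl⟩
lemma kF_mem (i) : kF i ∈ NN := Submodule.subset_span ⟨i, [], rfl⟩
lemma kE1_mem : kE 1 ∈ E1s := Submodule.subset_span rfl
lemma xg_mem (j) : xg j ∈ PP := ⟨xx j, by rw [xx, Dy_wd]; rfl⟩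
lemma kE_mem (i) : kE i ∈ PP ⊔ E1s := by
  fin_cases i
  · exact Submodule.mem_sup_left (xg_mem 0)
  · exact Submodule.mem_sup_right kE1_mem

lemma F_HHs (j) : ∀ z ∈ HHs, ⁅kF j, z⁆ ∈ NN := by
  intro z hz
  refine lie_span _ _ _ ?_ hz
  rintro _ ⟨i, rfl⟩
  rw [← lie_skew, gHF, ← neg_smul]
  exact Submodule.smul_mem _ _ (kF_mem j)
lemma F_NN (j) : ∀ z ∈ NN, ⁅kF j, z⁆ ∈ NN := by
  intro z hz
  refine lie_span _ _ _ ?_ hz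
  rintro _ ⟨i, w, rfl⟩
  exact Submodule.subset_span ⟨i, j :: w, rfl⟩
lemma H_NN (j) : ∀ z ∈ NN, ⁅kH j, z⁆ ∈ NN := by
  intro z hz
  refine lie_span _ _ _ ?_ hz
  rintro _ ⟨i, w, rfl⟩
  rw [gH_FW]
  exact Submodule.smul_mem _ _ (Submodule.subset_span ⟨i, w, rfl⟩)
lemma H_HHs (j) : ∀ z ∈ HHs, ⁅kH j, z⁆ ∈ HHs := by
  intro z hz
  refine lie_span _ _ _ ?_ hz
  rintro _ ⟨i, rfl⟩
  rw [gHH]; exact zero_mem _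
lemma E_NN (j) : ∀ z ∈ NN, ⁅kE j, z⁆ ∈ HHs ⊔ NN := by
  intro z hz
  refine lie_span _ _ _ ?_ hz
  rintro _ ⟨i, w, rfl⟩
  induction w with
  | nil =>
    rw [FW, gEF]; split_ifs
    · exact Submodule.mem_sup_left (kH_mem _)
    · exact zero_mem _
  | cons k w ih =>
    rw [FW, leibniz_lie, gEF]
    refine add_mem ?_ (Submodule.mem_sup_right (lie_sup _ _ _ _ (F_HHs k) (F_NN k) _ ih))
    split_ifs
    · exact Submodule.mem_sup_right (H_NN _ _ (Submodule.subset_span ⟨i, w, rfl⟩))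
    · rw [zero_lie]; exact zero_mem _
lemma E_HHs (j) : ∀ z ∈ HHs, ⁅kE j, z⁆ ∈ PP ⊔ E1s := by
  intro z hz
  refine lie_span _ _ _ ?_ hz
  rintro _ ⟨i, rfl⟩
  rw [← lie_skew, gHE, ← neg_smul]
  exact Submodule.smul_mem _ _ (kE_mem j)
lemma x_PP (j) : ∀ z ∈ PP, ⁅xg j, z⁆ ∈ PP := by
  rintro _ ⟨a, rfl⟩
  have := Dy_mul xg (xx j) a
  rw [rho_xx, LieAlgebra.ad_apply, ← sub_eq_iff_eq_add] at this
  rw [← this]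
  refine sub_mem ⟨_, rfl⟩ (Submodule.smul_mem _ _ ⟨_, rfl⟩)
lemma E1_PP : ∀ z ∈ PP, ⁅kE 1, z⁆ ∈ PP := by
  rintro _ ⟨a, rfl⟩
  exact ⟨_, Dy_E2 a⟩
lemma F1_PP : ∀ z ∈ PP, ⁅kF 1, z⁆ ∈ PP := by
  rintro _ ⟨a, rfl⟩
  exact ⟨_, Dy_F2 a⟩
lemma H_PP (i) : ∀ z ∈ PP, ⁅kH i, z⁆ ∈ PP := by
  rintro _ ⟨a, rfl⟩
  exact ⟨_, Dy_H i a⟩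
lemma x_E1s (j) : ∀ z ∈ E1s, ⁅xg j, z⁆ ∈ PP := by
  intro z hz
  refine lie_span _ _ _ ?_ hz
  rintro _ rfl
  rw [← lie_skew, gE1x, ← neg_smul]
  exact Submodule.smul_mem _ _ (xg_mem _)
lemma x_HHs (j) : ∀ z ∈ HHs, ⁅xg j, z⁆ ∈ PP := by
  intro z hz
  refine lie_span _ _ _ ?_ hz
  rintro _ ⟨i, rfl⟩
  rw [← lie_skew, gHx, ← neg_smul]
  exact Submodule.smul_mem _ _ (xg_mem _)
lemma H_E1s (i) : ∀ z ∈ E1s, ⁅kH i, z⁆ ∈ E1s := by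
  intro z hz
  refine lie_span _ _ _ ?_ hz
  rintro _ rfl
  rw [gHE]
  exact Submodule.smul_mem _ _ kE1_mem
lemma E1_E1s : ∀ z ∈ E1s, ⁅kE 1, z⁆ ∈ E1s := by
  intro z hz
  refine lie_span _ _ _ ?_ hz
  rintro _ rfl
  rw [lie_self]
  exact zero_mem _
lemma F_E1s (i) : ∀ z ∈ E1s, ⁅kF i, z⁆ ∈ HHs := by
  intro z hz
  refine lie_span _ _ _ ?_ hz
  rintro _ rfl
  rw [gFE]; split_ifs
  · exact neg_mem (kH_mem _)
  · exact zero_mem _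
lemma gbet_PP (j) : ∀ z ∈ PP, ⁅gbet j, z⁆ ∈ PP := by
  intro z hz
  fin_cases j
  · show ⁅-kH 0, z⁆ ∈ PP
    rw [neg_lie]; exact neg_mem (H_PP 0 z hz)
  · show ⁅-(3 : ℚ) • kE 1, z⁆ ∈ PP
    rw [smul_lie]; exact Submodule.smul_mem _ _ (E1_PP z hz)
  · show ⁅(0 : KM), z⁆ ∈ PP
    rw [zero_lie]; exact zero_mem _
  · show ⁅(0 : KM), z⁆ ∈ PP
    rw [zero_lie]; exact zero_mem _
lemma gbet_mem (j) : gbet j ∈ PP ⊔ (E1s ⊔ HHs) := by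
  fin_cases j
  · show -kH 0 ∈ _
    exact neg_mem (Submodule.mem_sup_right (Submodule.mem_sup_right (kH_mem 0)))
  · show -(3 : ℚ) • kE 1 ∈ _
    exact Submodule.smul_mem _ _ (Submodule.mem_sup_right (Submodule.mem_sup_left kE1_mem))
  · exact zero_mem _
  · exact zero_mem _

lemma F0_word (w) : ⁅kF 0, DW xg w⁆ ∈ PP ⊔ (E1s ⊔ HHs) := by
  match w with
  | [] => rw [DW, lie_zero]; exact zero_mem _
  | [j] => rw [DW, gF0x]; exact gbet_mem j
  | j :: k :: w =>
    rw [DW_cons xg j (k :: w) (by simp), leibniz_lie, gF0x]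
    refine Submodule.mem_sup_left (add_mem (gbet_PP j _ ⟨wd (k :: w), Dy_wd _ _⟩) ?_)
    exact lie_sup _ _ _ _ (x_PP j) (lie_sup _ _ _ _ (x_E1s j) (x_HHs j)) _ (F0_word (k :: w))
lemma F0_PP : ∀ z ∈ PP, ⁅kF 0, z⁆ ∈ SS := by
  have hle : PP ⊔ (E1s ⊔ HHs) ≤ SS := sup_le PP_SS (sup_le E1s_SS HHs_SS)
  rintro _ ⟨a, rfl⟩
  refine kt_induction ?_ ?_ ?_ ?_ a
  · simp
  · intro y z hy hz; rw [map_add, lie_add]; exact add_mem hy hz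
  · intro c y hy; rw [map_smul, lie_smul]; exact Submodule.smul_mem _ _ hy
  · intro w; rw [Dy_wd]; exact hle (F0_word w)

lemma gen_SS (g) : KMgen A2hyp g ∈ SS := by
  rcases g with i | i | i
  · exact HHs_SS (kH_mem i)
  · exact le_sup_left (α := Submodule ℚ KM) (kE_mem i)
  · exact NN_SS (kF_mem i)

lemma gen_lie_SS (g) : ∀ z ∈ SS, ⁅KMgen A2hyp g, z⁆ ∈ SS := by
  have hEE : PP ⊔ E1s ≤ SS := le_sup_left
  have hHN : HHs ⊔ NN ≤ SS := le_sup_right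
  rcases g with i | i | i
  · exact lie_sup _ _ _ _
      (lie_sup _ _ _ _ (fun z hz => PP_SS (H_PP i z hz)) (fun z hz => E1s_SS (H_E1s i z hz)))
      (lie_sup _ _ _ _ (fun z hz => HHs_SS (H_HHs i z hz)) (fun z hz => NN_SS (H_NN i z hz)))
  · refine lie_sup _ _ _ _ ?_
      (lie_sup _ _ _ _ (fun z hz => hEE (E_HHs i z hz)) (fun z hz => hHN (E_NN i z hz)))
    fin_cases i
    · exact lie_sup _ _ _ _ (fun z hz => PP_SS (x_PP 0 z hz)) (fun z hz => PP_SS (x_E1s 0 z hz))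
    · exact lie_sup _ _ _ _ (fun z hz => PP_SS (E1_PP z hz)) (fun z hz => E1s_SS (E1_E1s z hz))
  · refine lie_sup _ _ _ _ (lie_sup _ _ _ _ ?_ (fun z hz => HHs_SS (F_E1s i z hz)))
      (lie_sup _ _ _ _ (fun z hz => NN_SS (F_HHs i z hz)) (fun z hz => NN_SS (F_NN i z hz)))
    fin_cases i
    · exact F0_PP
    · exact fun z hz => PP_SS (F1_PP z hz)

def LSS : LieSubalgebra ℚ KM where
  carrier := {y | y ∈ SS ∧ ∀ s ∈ SS, ⁅y, s⁆ ∈ SS}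
  add_mem' := fun ha hb => ⟨add_mem ha.1 hb.1, fun s hs => by
    rw [add_lie]; exact add_mem (ha.2 s hs) (hb.2 s hs)⟩
  zero_mem' := ⟨zero_mem _, fun s _ => by rw [zero_lie]; exact zero_mem _⟩
  smul_mem' := fun c y h => ⟨Submodule.smul_mem _ _ h.1, fun s hs => by
    rw [smul_lie]; exact Submodule.smul_mem _ _ (h.2 s hs)⟩
  lie_mem' := fun {a b} ha hb => ⟨ha.2 b hb.1, fun s hs => by
    rw [lie_lie]; exact sub_mem (ha.2 _ (hb.2 s hs)) (hb.2 _ (ha.2 s hs))⟩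

lemma SS_top (y : KM) : y ∈ SS := by
  let P : FL →ₗ⁅ℚ⁆ LSS :=
    FreeLieAlgebra.lift ℚ (fun g => ⟨KMgen A2hyp g, gen_SS g, gen_lie_SS g⟩)
  have : qm = LSS.incl.comp P := by
    apply FreeLieAlgebra.hom_ext
    intro g
    simp [P, qm_of]
  obtain ⟨t, rfl⟩ := qm_surj y
  rw [this]
  exact (P t).2.1

/-! weights -/
lemma eig_lemma {V : Type*} [AddCommGroup V] [Module ℚ V] (T : Module.End ℚ V) (μ : ℚ) (Z : Set V)
    (hZ : ∀ z ∈ Z, ∃ ν : ℚ, T z = ν • z) (y : V) (hy : y ∈ Submodule.span ℚ Z) (hT : T y = μ • y) :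
    y ∈ Submodule.span ℚ {z ∈ Z | T z = μ • z} := by
  have hle : Submodule.span ℚ Z ≤ Submodule.span ℚ {z ∈ Z | T z = μ • z} ⊔
      ⨆ ν, ⨆ (_ : ν ≠ μ), Module.End.eigenspace T ν := by
    rw [Submodule.span_le]
    intro z hz
    obtain ⟨ν, hν⟩ := hZ z hz
    by_cases h : ν = μ
    · subst h; exact Submodule.mem_sup_left (Submodule.subset_span ⟨hz, hν⟩)
    · refine Submodule.mem_sup_right ?_
      exact (le_iSup₂ (f := fun ν (_ : ν ≠ μ) => Module.End.eigenspace T ν) ν h)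
        (Module.End.mem_eigenspace_iff.2 hν)
  obtain ⟨a, ha, b, hb, rfl⟩ := Submodule.mem_sup.1 (hle hy)
  have hsub : Submodule.span ℚ {z ∈ Z | T z = μ • z} ≤ Module.End.eigenspace T μ := by
    rw [Submodule.span_le]
    intro z hz
    exact Module.End.mem_eigenspace_iff.2 hz.2
  have hb2 : b ∈ Module.End.eigenspace T μ := by
    have h1 := Module.End.mem_eigenspace_iff.2 hT
    have := sub_mem h1 (hsub ha)
    rwa [add_sub_cancel_left] at this
  have := (Module.End.eigenspaces_iSupIndep T) μ
  have hb0 : b = 0 := Submodule.disjoint_def.1 this b hb2 hb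
  rw [hb0, add_zero]; exact ha

def lsum (w : List (Fin 4)) : ℕ := (w.map (fun j => (j : ℕ))).sum

lemma gH_DW (i) (w) : ⁅kH i, DW xg w⁆ =
    (A2hyp i 0 * w.length + A2hyp i 1 * lsum w : ℚ) • DW xg w := by
  match w with
  | [] => simp [DW]
  | [j] => rw [DW, gHx]; simp [lw, lsum]
  | j :: k :: w =>
    rw [DW_cons xg j (k :: w) (by simp), leibniz_lie, gHx, gH_DW i (k :: w), smul_lie, lie_smul,
      ← add_smul]
    congr 1
    simp [lw, lsum]; ring

def ZZ : Set KM := (Set.range (DW xg) ∪ {kE 1}) ∪ (Set.range kH ∪ {z | ∃ i w, z = FW i w})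

lemma ZZ_span : Submodule.span ℚ ZZ = ⊤ := by
  rw [eq_top_iff]
  intro y _
  have hS : SS ≤ Submodule.span ℚ ZZ := by
    rw [ZZ, Submodule.span_union, Submodule.span_union, Submodule.span_union]
    refine sup_le_sup (sup_le_sup ?_ le_rfl) (sup_le_sup le_rfl le_rfl)
    rintro _ ⟨a, rfl⟩
    refine kt_induction ?_ ?_ ?_ ?_ a
    · simp
    · intro y z hy hz; rw [map_add]; exact add_mem hy hz
    · intro c y hy; rw [map_smul]; exact Submodule.smul_mem _ _ hy
    · intro w; rw [Dy_wd]; exact Submodule.subset_span ⟨w, rfl⟩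
  exact hS (SS_top y)

def d1 : Module.End ℚ KM :=
  (-2 / 5 : ℚ) • LieAlgebra.ad ℚ KM (kH 0) + (-3 / 5 : ℚ) • LieAlgebra.ad ℚ KM (kH 1)
def d2 : Module.End ℚ KM :=
  (-3 / 5 : ℚ) • LieAlgebra.ad ℚ KM (kH 0) + (-2 / 5 : ℚ) • LieAlgebra.ad ℚ KM (kH 1)

lemma d_eval (z : KM) (p q : ℚ) (h : ∀ i, ⁅kH i, z⁆ = (A2hyp i 0 * p + A2hyp i 1 * q : ℚ) • z) :
    d1 z = p • z ∧ d2 z = q • z := by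
  simp only [d1, d2, LinearMap.add_apply, LinearMap.smul_apply, LieAlgebra.ad_apply, h, smul_smul,
    ← add_smul]
  constructor <;> congr 1 <;> simp [A2hyp] <;> ring

lemma FW_eval (i w) : ∃ p q : ℕ, ∀ a, ⁅kH a, FW i w⁆ =
    (A2hyp a 0 * (-p : ℚ) + A2hyp a 1 * (-q : ℚ) : ℚ) • FW i w := by
  have : ∃ p q : ℕ, ∀ a, fwt a i w = A2hyp a 0 * (-p : ℚ) + A2hyp a 1 * (-q : ℚ) := by
    have key : ∀ i : Fin 2, ∃ p q : ℕ, ∀ a, -(A2hyp a i : ℚ) = A2hyp a 0 * (-p : ℚ) +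
        A2hyp a 1 * (-q : ℚ) := by
      intro i
      fin_cases i
      · exact ⟨1, 0, by simp⟩
      · exact ⟨0, 1, by simp⟩
    induction w with
    | nil => exact key i
    | cons j w ih =>
      obtain ⟨p, q, h⟩ := ih
      obtain ⟨p', q', h'⟩ := key j
      refine ⟨p + p', q + q', fun a => ?_⟩
      rw [fwt, h, h']; push_cast; ring
  obtain ⟨p, q, h⟩ := this
  exact ⟨p, q, fun a => by rw [gH_FW, h]⟩

def Wset (m n : ℕ) : Set (List (Fin 4)) := {w | w.length = m ∧ lsum w = n}
def TT (m n : ℕ) : Submodule ℚ KT := Submodule.span ℚ (wd '' Wset m n)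

lemma rootSpace_eq (n : ℕ) :
    rootSpace A2hyp ![7, (n : ℤ)] = (TT 7 n).map (Dy xg) := by
  have hw : ∀ i, ((∑ j, A2hyp i j * (![7, (n : ℤ)] : Fin 2 → ℤ) j : ℤ) : ℚ) =
      A2hyp i 0 * (7 : ℕ) + A2hyp i 1 * n := by
    intro i; simp [Fin.sum_univ_two]
  have hmem : ∀ y, y ∈ rootSpace A2hyp ![7, (n : ℤ)] ↔
      ∀ i, ⁅kH i, y⁆ = (A2hyp i 0 * (7 : ℕ) + A2hyp i 1 * n : ℚ) • y := by
    intro y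
    rw [rootSpace, Submodule.mem_iInf]
    refine forall_congr' fun i => ?_
    rw [Module.End.mem_eigenspace_iff, hw]; rfl
  rw [TT, Submodule.map_span]
  apply le_antisymm
  · intro y hy
    rw [hmem] at hy
    obtain ⟨y1, y2⟩ := d_eval y _ _ hy
    have hZ : ∀ z ∈ ZZ, ∃ p q : ℚ, (∀ a, ⁅kH a, z⁆ = (A2hyp a 0 * p + A2hyp a 1 * q : ℚ) • z) ∧
        ((p : ℚ) ≤ 0 ∨ ∃ w, z = DW xg w ∧ p = w.length ∧ q = lsum w) := by
      rintro z ((⟨w, rfl⟩ | rfl) | (⟨i, rfl⟩ | ⟨i, w, rfl⟩))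
      · exact ⟨_, _, fun a => gH_DW a w, Or.inr ⟨w, rfl, rfl, rfl⟩⟩
      · exact ⟨0, 1, fun a => by rw [gHE]; simp, Or.inl le_rfl⟩
      · exact ⟨0, 0, fun a => by rw [gHH]; simp, Or.inl le_rfl⟩
      · obtain ⟨p, q, h⟩ := FW_eval i w
        exact ⟨-p, -q, h, Or.inl (by simp)⟩
    have s1 := eig_lemma d1 _ ZZ (fun z hz => by
      obtain ⟨p, q, h, -⟩ := hZ z hz
      exact ⟨p, (d_eval z p q h).1⟩) y (by rw [ZZ_span]; trivial) y1
    have s2 := eig_lemma d2 _ _ (fun z hz => by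
      obtain ⟨p, q, h, -⟩ := hZ z hz.1
      exact ⟨q, (d_eval z p q h).2⟩) y s1 y2
    refine (Submodule.span_le.2 ?_) s2
    rintro z ⟨⟨hz, z1⟩, z2⟩
    by_cases hz0 : z = 0
    · rw [hz0]; exact zero_mem _
    obtain ⟨p, q, h, h'⟩ := hZ z hz
    obtain ⟨t1, t2⟩ := d_eval z p q h
    have hp : p = (7 : ℕ) := smul_left_injective ℚ hz0 (t1.symm.trans z1)
    have hq : q = n := smul_left_injective ℚ hz0 (t2.symm.trans z2)
    rcases h' with h' | ⟨w, rfl, hl, hs⟩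
    · rw [hp] at h'; norm_num at h'
    · refine Submodule.subset_span ⟨wd w, ⟨w, ⟨?_, ?_⟩, rfl⟩, Dy_wd _ _⟩
      · exact_mod_cast hl.symm.trans hp
      · exact_mod_cast hs.symm.trans hq
  · rw [Submodule.span_le]
    rintro _ ⟨_, ⟨w, ⟨h1, h2⟩, rfl⟩, rfl⟩
    show _ ∈ rootSpace _ _
    rw [hmem]
    intro i
    rw [Dy_wd, gH_DW, h1, h2]

/-! homogeneity -/
lemma lsum_append (u w) : lsum (u ++ w) = lsum u + lsum w := by simp [lsum]
lemma lsum_cons (j w) : lsum (j :: w) = (j : ℕ) + lsum w := by simp [lsum]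

lemma wd_TT {w : List (Fin 4)} {m n : ℕ} (h1 : w.length = m) (h2 : lsum w = n) : wd w ∈ TT m n :=
  Submodule.subset_span ⟨w, ⟨h1, h2⟩, rfl⟩

lemma TT_induct {m n : ℕ} (P : Submodule ℚ KT) (Q : EK)
    (h : ∀ w, w.length = m → lsum w = n → Q (wd w) ∈ P) {a : KT} (ha : a ∈ TT m n) : Q a ∈ P := by
  have : TT m n ≤ P.comap Q := by
    rw [TT, Submodule.span_le]
    rintro _ ⟨w, ⟨h1, h2⟩, rfl⟩
    exact h w h1 h2
  exact this ha

lemma TT_mul_left (u : List (Fin 4)) {m n : ℕ} {a : KT} (ha : a ∈ TT m n) :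
    wd u * a ∈ TT (u.length + m) (lsum u + n) := by
  refine TT_induct _ (LM (wd u)) ?_ ha
  intro w h1 h2
  rw [LM_apply, ← wd_append]
  exact wd_TT (by simp [h1]) (by simp [lsum_append, h2])

lemma TT_mul_right (u : List (Fin 4)) {m n : ℕ} {a : KT} (ha : a ∈ TT m n) :
    a * wd u ∈ TT (u.length + m) (lsum u + n) := by
  refine TT_induct _ (LinearMap.mulRight ℚ (wd u)) ?_ ha
  intro w h1 h2
  rw [LinearMap.mulRight_apply, ← wd_append]
  exact wd_TT (by simp [h1, add_comm]) (by simp [lsum_append, h2, add_comm])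

lemma TT_lie (j : Fin 4) {m n : ℕ} {a : KT} (ha : a ∈ TT m n) :
    ⁅xx j, a⁆ ∈ TT (m + 1) (j + n) := by
  rw [LieRing.of_associative_ring_bracket]
  have h1 := TT_mul_left [j] ha
  have h2 := TT_mul_right [j] ha
  have e : lsum [j] = j := by simp [lsum]
  rw [e, List.length_singleton, add_comm] at h1 h2
  exact sub_mem h1 h2

lemma DW_TT (w) : DW xx w ∈ TT w.length (lsum w) := by
  match w with
  | [] => exact zero_mem _
  | [j] => exact wd_TT rfl rfl
  | j :: k :: w =>
    rw [DW_cons xx j (k :: w) (by simp), lsum_cons]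
    exact TT_lie j (DW_TT (k :: w))

lemma Dy_TT {m n : ℕ} {a : KT} (ha : a ∈ TT m n) : Dy xx a ∈ TT m n := by
  refine TT_induct _ (Dy xx) ?_ ha
  intro w h1 h2
  rw [Dy_wd]
  have := DW_TT w
  rwa [h1, h2] at this

lemma TT_len {m n : ℕ} {a : KT} (ha : a ∈ TT m n) :
    a ∈ Submodule.span ℚ (wd '' {w | w.length = m}) :=
  Submodule.span_mono (Set.image_mono fun _ h => h.1) ha

lemma rho_TT (u : List (Fin 4)) {m n : ℕ} {a : KT} (ha : a ∈ TT m n) :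
    rho xx (wd u) a ∈ TT (u.length + m) (lsum u + n) := by
  induction u with
  | nil =>
    simp only [wd_nil, map_one, Module.End.one_apply, List.length_nil, zero_add]
    rwa [show lsum [] = 0 from rfl, zero_add]
  | cons j u ih =>
    rw [wd_cons, map_mul, Module.End.mul_apply, rho_xx, LieAlgebra.ad_apply]
    have := TT_lie j ih
    rw [lsum_cons, List.length_cons, add_assoc (j : ℕ)]
    rwa [add_right_comm] at this

lemma derW_TT (w) : derW (fun j => cE j • xx (j + 1)) w ∈ TT w.length (lsum w + 1) := by
  induction w with
  | nil => exact zero_mem _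
  | cons j w ih =>
    rw [derW]
    refine add_mem ?_ ?_
    · rw [smul_mul_assoc, ← wd_cons]
      by_cases hj : j = 3
      · subst hj; simp [cE]
      · refine Submodule.smul_mem _ _ (wd_TT (by simp) ?_)
        rw [lsum_cons, lsum_cons]
        have : ((j + 1 : Fin 4) : ℕ) = j + 1 := by revert j; decide
        omega
    · have := TT_mul_left [j] ih
      rw [lsum_cons, add_assoc, List.length_cons, add_comm w.length]
      convert this using 2
      all_goals rfl

lemma oE2_TT {m n : ℕ} {a : KT} (ha : a ∈ TT m n) : oE2 a ∈ TT m (n + 1) := by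
  refine TT_induct _ oE2 ?_ ha
  intro w h1 h2
  rw [oE2, der_wd]
  have := derW_TT w
  rwa [h1, h2] at this

lemma rr_TT (k) : rr k ∈ TT 4 (k + 1) := by
  induction k with
  | zero => exact DW_TT [0, 0, 0, 1]
  | succ k ih => exact oE2_TT ih

lemma Dy_oE2 (a : KT) : Dy xx (oE2 a) = oE2 (Dy xx a) :=
  Dy_der xx oE2 (fun a b => der_bracket _ a b) cE (fun j => j + 1) (fun j => der_xx _ j) a

lemma Dy_xx_rr (k) : Dy xx (rr k) = (4 : ℚ) • rr k := by
  induction k with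
  | zero =>
    have : rr 0 = DW xx [0, 0, 0, 1] := rfl
    rw [this, Dy_DW]; rfl
  | succ k ih => rw [rr, Dy_oE2, ih, map_smul]

lemma co_nil_TT {m n : ℕ} {a : KT} (ha : a ∈ TT (m + 1) n) : co [] a = 0 := by
  have : TT (m + 1) n ≤ LinearMap.ker (co []) := by
    rw [TT, Submodule.span_le]
    rintro _ ⟨w, ⟨h1, h2⟩, rfl⟩
    show co [] (wd w) = 0
    rw [co_wd, if_neg]
    rintro rfl; simp at h1
  exact this ha

lemma co_nil_rr (k) : co [] (rr k) = 0 := co_nil_TT (rr_TT k)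

lemma Dy_mul_rr (a : KT) (k) : Dy xx (a * rr k) = (4 : ℚ) • rho xx a (rr k) := by
  rw [Dy_mul, co_nil_rr, Dy_xx_rr, map_smul, zero_smul, add_zero]

lemma rho_Dy (b : KT) : rho xx (Dy xx b) = LieAlgebra.ad ℚ KT (Dy xx b) := by
  refine kt_induction ?_ ?_ ?_ ?_ b
  · simp
  · intro y z hy hz; rw [map_add, map_add, hy, hz, map_add]
  · intro c y hy; rw [map_smul, map_smul, hy, map_smul]
  · intro w; rw [Dy_wd, rho_DW]

lemma rho_rr (k) : rho xx (rr k) = LieAlgebra.ad ℚ KT (rr k) := by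
  have h := rho_Dy (rr k)
  rw [Dy_xx_rr, map_smul, map_smul] at h
  exact smul_right_injective _ (by norm_num : (4 : ℚ) ≠ 0) h

def JJ : Submodule ℚ KT := Submodule.span ℚ {z | ∃ u k, z = rho xx (wd u) (rr k)}
def Jn (n : ℕ) : Submodule ℚ KT :=
  Submodule.span ℚ {z | ∃ u k, u.length = 3 ∧ lsum u + (k + 1) = n ∧ z = rho xx (wd u) (rr k)}

lemma rho_JJ (a : KT) (k) : rho xx a (rr k) ∈ JJ := by
  refine kt_induction ?_ ?_ ?_ ?_ a
  · simp
  · intro y z hy hz; rw [map_add]; exact add_mem hy hz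
  · intro c y hy; rw [map_smul]; exact Submodule.smul_mem _ _ hy
  · intro w; exact Submodule.subset_span ⟨w, k, rfl⟩

lemma Dy_II {z : KT} (hz : z ∈ II) : Dy xx z ∈ JJ := by
  have : II ≤ JJ.comap (Dy xx) := by
    rw [II, Submodule.span_le]
    rintro _ ⟨a, k, b, rfl⟩
    show Dy xx (a * rr k * b) ∈ JJ
    rw [Dy_mul]
    refine add_mem ?_ ?_
    · rw [map_mul, rho_rr, Module.End.mul_apply, LieAlgebra.ad_apply, ← lie_skew,
        ← LieAlgebra.ad_apply ℚ, ← rho_Dy, map_neg, ← Module.End.mul_apply, ← map_mul]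
      exact neg_mem (rho_JJ _ _)
    · rw [Dy_mul_rr]
      exact Submodule.smul_mem _ _ (Submodule.smul_mem _ _ (rho_JJ _ _))
  exact this hz

open Classical in
/-- projection to a homogeneous component -/
def prj (m n : ℕ) : EK := lin (fun w => if w.length = m ∧ lsum w = n then wd w else 0)

lemma prj_same {m n : ℕ} {a : KT} (ha : a ∈ TT m n) : prj m n a = a := by
  have : TT m n ≤ LinearMap.ker (prj m n - 1) := by
    rw [TT, Submodule.span_le]
    rintro _ ⟨w, ⟨h1, h2⟩, rfl⟩
    show (prj m n - 1) (wd w) = 0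
    simp [prj, lin_wd, h1, h2]
  have := this ha
  rw [LinearMap.mem_ker, LinearMap.sub_apply, sub_eq_zero] at this
  exact this

lemma prj_diff {m n m' n' : ℕ} (h : ¬ (m' = m ∧ n' = n)) {a : KT} (ha : a ∈ TT m' n') :
    prj m n a = 0 := by
  have : TT m' n' ≤ LinearMap.ker (prj m n) := by
    rw [TT, Submodule.span_le]
    rintro _ ⟨w, ⟨h1, h2⟩, rfl⟩
    show (prj m n) (wd w) = 0
    simp only [prj, lin_wd, h1, h2, if_neg h]
  exact this ha

lemma prj_JJ (n : ℕ) {z : KT} (hz : z ∈ JJ) : prj 7 n z ∈ Jn n := by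
  have : JJ ≤ (Jn n).comap (prj 7 n) := by
    rw [JJ, Submodule.span_le]
    rintro _ ⟨u, k, rfl⟩
    show prj 7 n _ ∈ Jn n
    have ht := rho_TT u (rr_TT k)
    by_cases h : u.length + 4 = 7 ∧ lsum u + (k + 1) = n
    · rw [h.1, h.2] at ht
      rw [prj_same ht]
      exact Submodule.subset_span ⟨u, k, by omega, h.2, rfl⟩
    · rw [prj_diff h ht]; exact zero_mem _
  exact this hz

/-- image of the Dynkin operator in degree (7,n) -/
def Rn (n : ℕ) : Submodule ℚ KT := (TT 7 n).map (Dy xx)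

lemma Jn_le (n) : Jn n ≤ Rn n := by
  rw [Jn, Submodule.span_le]
  rintro _ ⟨u, k, hu, hk, rfl⟩
  refine ⟨(1 / 4 : ℚ) • (wd u * rr k), ?_, ?_⟩
  · have := TT_mul_left u (rr_TT k)
    rw [hu, hk] at this
    exact Submodule.smul_mem _ _ this
  · rw [map_smul, Dy_mul_rr, smul_smul]; norm_num

lemma Jn_ker (n) : Jn n ≤ LinearMap.ker (Dy xg) := by
  rw [Jn, Submodule.span_le]
  rintro _ ⟨u, k, hu, hk, rfl⟩
  show Dy xg _ = 0
  have h1 : rho xx (wd u) (rr k) = (1 / 4 : ℚ) • Dy xx (wd u * rr k) := by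
    rw [Dy_mul_rr, smul_smul]; norm_num
  have := TT_len (TT_mul_left u (rr_TT k))
  rw [h1, map_smul, Dy_Dy xg _ _ this, Dy_mul, Dy_rr, co_nil_rr]; simp

lemma ker_Rn (n) : LinearMap.ker (Dy xg) ⊓ Rn n = Jn n := by
  apply le_antisymm
  · rintro x ⟨hx, a, ha, rfl⟩
    have hx' : Dy xg (Dy xx a) = 0 := hx
    rw [Dy_Dy xg a 7 (TT_len ha)] at hx'
    have hga : Dy xg a = 0 := (smul_eq_zero.1 hx').resolve_left (by norm_num)
    have h1 := Dy_II (ker_mem a hga)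
    rw [Dy_Dy xx a 7 (TT_len ha)] at h1
    have h2 := prj_JJ n h1
    rw [map_smul, prj_same (Dy_TT ha)] at h2
    have h3 := Submodule.smul_mem _ (1 / 7 : ℚ) h2
    rw [smul_smul] at h3
    norm_num at h3
    exact h3
  · exact le_inf (Jn_ker n) (Jn_le n)

lemma root_Rn (n : ℕ) : rootSpace A2hyp ![7, (n : ℤ)] = (Rn n).map (Dy xg) := by
  rw [rootSpace_eq]
  apply le_antisymm
  · rintro _ ⟨a, ha, rfl⟩
    refine ⟨(1 / 7 : ℚ) • Dy xx a, Submodule.smul_mem _ _ ⟨a, ha, rfl⟩, ?_⟩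
    rw [map_smul, Dy_Dy xg a 7 (TT_len ha), smul_smul]; norm_num
  · rintro _ ⟨_, ⟨a, ha, rfl⟩, rfl⟩
    exact ⟨_, Dy_TT ha, rfl⟩

lemma rootMult_add (n : ℕ) [FiniteDimensional ℚ (Rn n)] :
    rootMult A2hyp ![7, (n : ℤ)] + Module.finrank ℚ (Jn n) = Module.finrank ℚ (Rn n) := by
  rw [rootMult, root_Rn, ← ker_Rn]
  have h := LinearMap.finrank_range_add_finrank_ker ((Dy xg).domRestrict (Rn n))
  rw [← h, LinearMap.range_domRestrict]
  congr 1
  have e : LinearMap.ker ((Dy xg).domRestrict (Rn n)) =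
      (LinearMap.ker (Dy xg) ⊓ Rn n).comap (Rn n).subtype := by
    ext x; simp
  rw [e]
  exact (LinearEquiv.finrank_eq (Submodule.comapSubtypeEquivOfLe inf_le_right)).symm

/-! coefficients -/
lemma co_eq_coeff (w) (a : KT) : co w a = a.coeff (FreeMonoid.ofList w) := by
  refine kt_induction ?_ ?_ ?_ ?_ a
  · simp
  · intro y z hy hz; simp [hy, hz]
  · intro c y hy; simp [hy]
  · intro u
    rw [co_wd]
    by_cases h : u = w
    · subst h; simp [wd]
    · have h' : FreeMonoid.ofList w ≠ FreeMonoid.ofList u := fun e => h (FreeMonoid.ofList.injective e).symm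
      rw [if_neg h]
      simp only [wd, MonoidAlgebra.coeff_single]
      rw [Finsupp.single_eq_of_ne h']

lemma co_ext {a : KT} (h : ∀ w, co w a = 0) : a = 0 := by
  ext m
  have := h (FreeMonoid.toList m)
  rw [co_eq_coeff] at this
  simpa using this

lemma co_TT {m n : ℕ} {w : List (Fin 4)} (hw : w.length ≠ m) {a : KT} (ha : a ∈ TT m n) :
    co w a = 0 := by
  have : TT m n ≤ LinearMap.ker (co w) := by
    rw [TT, Submodule.span_le]
    rintro _ ⟨u, ⟨h1, h2⟩, rfl⟩
    show co w (wd u) = 0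
    rw [co_wd, if_neg]
    rintro rfl; exact hw h1
  exact this ha

def hdb (a : Fin 4) : List (Fin 4) → Bool
  | [] => false
  | b :: _ => Nat.beq a.1 b.1

def lsb (a : Fin 4) : List (Fin 4) → Bool
  | [] => false
  | [b] => Nat.beq a.1 b.1
  | _ :: c :: t => lsb a (c :: t)

lemma nbeq (a b : Fin 4) : Nat.beq a.1 b.1 = true ↔ a = b := by
  rw [Nat.beq_eq, Fin.ext_iff]

lemma lsb_append (a b : Fin 4) (t) : lsb a (t ++ [b]) = Nat.beq a.1 b.1 := by
  match t with
  | [] => rfl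
  | [c] => rfl
  | c :: d :: t => exact lsb_append a b (d :: t)

lemma co_xx_mul (a : Fin 4) (w) (Y : KT) :
    co w (xx a * Y) = bif hdb a w then co w.tail Y else 0 := by
  refine kt_induction ?_ ?_ ?_ ?_ Y
  · simp
  · intro y z hy hz; rw [mul_add, map_add, hy, hz, map_add]; cases hdb a w <;> simp
  · intro c y hy; rw [mul_smul_comm, map_smul, hy, map_smul]; cases hdb a w <;> simp
  · intro u
    rw [← wd_cons, co_wd]
    cases w with
    | nil => simp [hdb]
    | cons b w =>
      rw [co_wd, hdb]
      by_cases h : a = b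
      · rw [(nbeq a b).2 h]; by_cases hu : u = w <;> simp [h, hu]
      · have : Nat.beq a.1 b.1 = false := by
          rw [← Bool.not_eq_true, nbeq]; exact h
        simp [this, h]

lemma co_mul_xx (a : Fin 4) (w) (Y : KT) :
    co w (Y * xx a) = bif lsb a w then co w.dropLast Y else 0 := by
  refine kt_induction ?_ ?_ ?_ ?_ Y
  · simp
  · intro y z hy hz; rw [add_mul, map_add, hy, hz, map_add]; cases lsb a w <;> simp
  · intro c y hy; rw [smul_mul_assoc, map_smul, hy, map_smul]; cases lsb a w <;> simp
  · intro u
    rw [xx, ← wd_append, co_wd]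
    rcases List.eq_nil_or_concat w with rfl | ⟨t, b, rfl⟩
    · simp [lsb]
    · rw [co_wd, List.concat_eq_append, lsb_append]
      by_cases h : a = b
      · rw [(nbeq a b).2 h]; simp [h]
      · have : Nat.beq a.1 b.1 = false := by
          rw [← Bool.not_eq_true, nbeq]; exact h
        simp [this, h]

lemma co_lie (a : Fin 4) (w) (Y : KT) : co w ⁅xx a, Y⁆ =
    (bif hdb a w then co w.tail Y else 0) - (bif lsb a w then co w.dropLast Y else 0) := by
  rw [LieRing.of_associative_ring_bracket, map_sub, co_xx_mul, co_mul_xx]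

/-- coefficient of an iterated commutator -/
def cfr (f : List (Fin 4) → ℤ) : List (Fin 4) → List (Fin 4) → ℤ
  | [], w => f w
  | a :: u, w => (bif hdb a w then cfr f u w.tail else 0) -
      (bif lsb a w then cfr f u w.dropLast else 0)

lemma co_rho (f : List (Fin 4) → ℤ) (Y : KT) (h : ∀ w, co w Y = (f w : ℚ)) (u w) :
    co w (rho xx (wd u) Y) = (cfr f u w : ℚ) := by
  induction u generalizing w with
  | nil => simp [wd_nil, cfr, h]
  | cons a u ih =>
    rw [wd_cons, map_mul, Module.End.mul_apply, rho_xx, LieAlgebra.ad_apply, co_lie, ih, ih, cfr]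
    cases hdb a w <;> cases lsb a w <;> simp

def cW : List (Fin 4) → List (Fin 4) → ℤ
  | [], _ => 0
  | [j], w => bif hdb j w then (match w with | [_] => 1 | _ => 0) else 0
  | j :: k :: u, w => (bif hdb j w then cW (k :: u) w.tail else 0) -
      (bif lsb j w then cW (k :: u) w.dropLast else 0)

lemma co_DW (u w) : co w (DW xx u) = (cW u w : ℚ) := by
  match u with
  | [] => simp [DW, cW]
  | [j] =>
    have : DW xx [j] = xx j * wd [] := by rw [wd_nil, mul_one]; rfl
    rw [this, co_xx_mul, co_wd]
    match w with
    | [] => simp [hdb, cW]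
    | [b] => 
      show (bif hdb j [b] then (if [] = [] then (1 : ℚ) else 0) else 0) = ((bif hdb j [b] then (1 : ℤ) else 0 : ℤ) : ℚ)
      cases hdb j [b] <;> simp
    | b :: c :: t =>
      show (bif hdb j (b :: c :: t) then (if [] = c :: t then (1 : ℚ) else 0) else 0) = ((bif hdb j (b :: c :: t) then (0 : ℤ) else 0 : ℤ) : ℚ)
      cases hdb j (b :: c :: t) <;> simp
  | j :: k :: u =>
    rw [DW_cons xx j (k :: u) (by simp), co_lie, co_DW (k :: u), co_DW (k :: u), cW]
    cases hdb j w <;> cases lsb j w <;> simp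

/-! coefficients of the relators -/
def bs (k : ℕ) : List (Fin 4) → ℤ
  | [a, b, c, d] => bif Nat.beq (a.1 + b.1 + c.1 + d.1) (k + 1) then
      (d.1 : ℤ) - 3 * c.1 + 3 * b.1 - a.1 else 0
  | _ => 0

lemma cEs (p a : Fin 4) (P : Prop) [Decidable P] : (cE p * if p + 1 = a ∧ P then 1 else 0 : ℚ) =
    (a.1 : ℚ) * if p = a - 1 ∧ P then 1 else 0 := by
  by_cases h : P
  · simp only [h, and_true]
    fin_cases p <;> fin_cases a <;> simp [cE]
  · simp [h]

lemma co_oE2 (a b c d : Fin 4) (n : ℕ) {X : KT} (hX : X ∈ TT 4 n) :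
    co [a, b, c, d] (oE2 X) = (a.1 : ℚ) * co [a - 1, b, c, d] X + (b.1 : ℚ) * co [a, b - 1, c, d] X
      + (c.1 : ℚ) * co [a, b, c - 1, d] X + (d.1 : ℚ) * co [a, b, c, d - 1] X := by
  rw [TT] at hX
  induction hX using Submodule.span_induction with
  | zero => simp
  | add y z _ _ hy hz => simp only [map_add, hy, hz]; ring
  | smul r y _ hy => simp only [map_smul, hy, smul_eq_mul]; ring
  | mem y h =>
    obtain ⟨w, ⟨h1, h2⟩, rfl⟩ := h
    match w, h1 with
    | [p, q, r, s], _ =>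
    have e : oE2 (wd [p, q, r, s]) = cE p • wd [p + 1, q, r, s] + cE q • wd [p, q + 1, r, s]
      + cE r • wd [p, q, r + 1, s] + cE s • wd [p, q, r, s + 1] := by
      rw [oE2, der_wd]
      simp only [derW, wd_cons, wd_nil, mul_one, mul_add, smul_mul_assoc, mul_smul_comm, mul_zero,
        add_zero, mul_assoc, add_assoc]
    rw [e]
    simp only [map_add, map_smul, co_wd, smul_eq_mul, List.cons.injEq, and_true]
    have t1 := cEs p a (q = b ∧ r = c ∧ s = d)
    have t2 := cEs q b (p = a ∧ r = c ∧ s = d)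
    have t3 := cEs r c (p = a ∧ q = b ∧ s = d)
    have t4 := cEs s d (p = a ∧ q = b ∧ r = c)
    rw [t1]
    congr 1
    · congr 1
      · congr 1
        convert t2 using 3 <;> tauto
      · convert t3 using 3 <;> tauto
    · convert t4 using 3 <;> tauto

lemma bterm (a : Fin 4) (S k : ℕ) (e L : ℚ) :
    (a.1 : ℚ) * (if ((a - 1 : Fin 4) : ℕ) + S = k + 1 then e * ((a - 1 : Fin 4) : ℕ) + L else 0) =
    if a.1 + S = k + 2 then (a.1 : ℚ) * (e * ((a.1 : ℚ) - 1) + L) else 0 := by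
  by_cases h : a = 0
  · subst h; simp
  · have h1 : a.1 = ((a - 1 : Fin 4) : ℕ) + 1 := by revert a; decide
    rw [h1]
    by_cases hS : ((a - 1 : Fin 4) : ℕ) + S = k + 1
    · rw [if_pos hS, if_pos (by omega)]; push_cast; ring
    · rw [if_neg hS, if_neg (by omega)]; simp

lemma bs_cast (k) (a b c d : Fin 4) : ((bs k [a, b, c, d] : ℤ) : ℚ) =
    if a.1 + b.1 + c.1 + d.1 = k + 1 then (d.1 : ℚ) - 3 * c.1 + 3 * b.1 - a.1 else 0 := by
  rw [bs]
  by_cases h : a.1 + b.1 + c.1 + d.1 = k + 1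
  · rw [if_pos h, (by rw [Nat.beq_eq]; exact h : Nat.beq (a.1 + b.1 + c.1 + d.1) (k + 1) = true)]; simp
  · have : Nat.beq (a.1 + b.1 + c.1 + d.1) (k + 1) = false := by
      rw [← Bool.not_eq_true, Nat.beq_eq]; exact h
    rw [if_neg h, this]; simp

lemma co_rr (k w) : co w (rr k) = (k.factorial : ℚ) * (bs k w : ℚ) := by
  by_cases hw : w.length = 4
  · match w, hw with
    | [a, b, c, d], _ =>
    induction k generalizing a b c d with
    | zero =>
      have : rr 0 = DW xx [0, 0, 0, 1] := rfl
      rw [this, co_DW]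
      have : ∀ a b c d, cW [0, 0, 0, 1] [a, b, c, d] = bs 0 [a, b, c, d] := by decide +kernel
      rw [this]; simp
    | succ k ih =>
      rw [rr, co_oE2 a b c d _ (rr_TT k), ih _ _ _ _ rfl, ih _ _ _ _ rfl, ih _ _ _ _ rfl, ih _ _ _ _ rfl]
      simp only [bs_cast]
      have t1 := bterm a (b + c + d) k (-1) (d - 3 * c + 3 * b)
      have t2 := bterm b (a + c + d) k 3 (d - 3 * c - a)
      have t3 := bterm c (a + b + d) k (-3) (d + 3 * b - a)
      have t4 := bterm d (a + b + c) k 1 (- 3 * c + 3 * b - a)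
      have key : ∀ (F x y z t x' y' z' t' : ℚ), x * (F * x') + y * (F * y') + z * (F * z') +
          t * (F * t') = F * (x * x' + y * y' + z * z' + t * t') := by intros; ring
      rw [key, Nat.factorial_succ]
      have e1 : (a.1 : ℚ) * (if ((a - 1 : Fin 4) : ℕ) + b + c + d = k + 1 then
        (d.1 : ℚ) - 3 * c.1 + 3 * b.1 - ((a - 1 : Fin 4) : ℕ) else 0) =
        if a.1 + b.1 + c.1 + d.1 = k + 1 + 1 then (a.1 : ℚ) * (-1 * ((a.1 : ℚ) - 1) + (d - 3 * c + 3 * b)) else 0 := by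
        rw [show a.1 + b.1 + c.1 + d.1 = a.1 + (b.1 + c.1 + d.1) by ring, ← t1]
        congr 2
        · rw [show ((a - 1 : Fin 4) : ℕ) + b + c + d = ((a - 1 : Fin 4) : ℕ) + (b + c + d) by ring]
        · ring
      have e2 : (b.1 : ℚ) * (if a.1 + ((b - 1 : Fin 4) : ℕ) + c + d = k + 1 then
        (d.1 : ℚ) - 3 * c.1 + 3 * ((b - 1 : Fin 4) : ℕ) - a.1 else 0) =
        if a.1 + b.1 + c.1 + d.1 = k + 1 + 1 then (b.1 : ℚ) * (3 * ((b.1 : ℚ) - 1) + (d - 3 * c - a)) else 0 := by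
        rw [show a.1 + b.1 + c.1 + d.1 = b.1 + (a.1 + c.1 + d.1) by ring, ← t2]
        congr 2
        · rw [show a.1 + ((b - 1 : Fin 4) : ℕ) + c + d = ((b - 1 : Fin 4) : ℕ) + (a + c + d) by ring]
        · ring
      have e3 : (c.1 : ℚ) * (if a.1 + b.1 + ((c - 1 : Fin 4) : ℕ) + d = k + 1 then
        (d.1 : ℚ) - 3 * ((c - 1 : Fin 4) : ℕ) + 3 * b.1 - a.1 else 0) =
        if a.1 + b.1 + c.1 + d.1 = k + 1 + 1 then (c.1 : ℚ) * (-3 * ((c.1 : ℚ) - 1) + (d + 3 * b - a)) else 0 := by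
        rw [show a.1 + b.1 + c.1 + d.1 = c.1 + (a.1 + b.1 + d.1) by ring, ← t3]
        congr 2
        · rw [show a.1 + b.1 + ((c - 1 : Fin 4) : ℕ) + d = ((c - 1 : Fin 4) : ℕ) + (a + b + d) by ring]
        · ring
      have e4 : (d.1 : ℚ) * (if a.1 + b.1 + c.1 + ((d - 1 : Fin 4) : ℕ) = k + 1 then
        (((d - 1 : Fin 4) : ℕ) : ℚ) - 3 * c.1 + 3 * b.1 - a.1 else 0) =
        if a.1 + b.1 + c.1 + d.1 = k + 1 + 1 then (d.1 : ℚ) * (1 * ((d.1 : ℚ) - 1) + (-3 * c + 3 * b - a)) else 0 := by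
        rw [show a.1 + b.1 + c.1 + d.1 = d.1 + (a.1 + b.1 + c.1) by ring, ← t4]
        congr 2
        · rw [show a.1 + b.1 + c.1 + ((d - 1 : Fin 4) : ℕ) = ((d - 1 : Fin 4) : ℕ) + (a + b + c) by ring]
        · ring
      rw [e1, e2, e3, e4]
      by_cases h : a.1 + b.1 + c.1 + d.1 = k + 1 + 1
      · simp only [if_pos h]
        have h' : (a.1 : ℚ) + b.1 + c.1 + d.1 = k + 1 + 1 := by exact_mod_cast h
        push_cast
        rw [show (k : ℚ) + 1 = (a.1 : ℚ) + b.1 + c.1 + d.1 - 1 by rw [h']; ring]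
        ring
      · simp only [if_neg h]; simp
  · rw [co_TT hw (rr_TT k)]
    have : bs k w = 0 := by
      match w, hw with
      | [], _ => rfl
      | [_], _ => rfl
      | [_, _], _ => rfl
      | [_, _, _], _ => rfl
      | _ :: _ :: _ :: _ :: _ :: _, _ => rfl
      | [_, _, _, _], h => exact absurd rfl h
    rw [this]; simp

lemma rr_zero {k : ℕ} (hk : 11 ≤ k) : rr k = 0 := by
  apply co_ext
  intro w
  rw [co_rr]
  suffices bs k w = 0 by rw [this]; simp
  match w with
  | [a, b, c, d] =>
    rw [bs]
    by_cases h : a.1 + b.1 + c.1 + d.1 = k + 1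
    · have ha : a.1 = 3 := by omega
      have hb : b.1 = 3 := by omega
      have hc : c.1 = 3 := by omega
      have hd : d.1 = 3 := by omega
      simp [ha, hb, hc, hd]
    · have : Nat.beq (a.1 + b.1 + c.1 + d.1) (k + 1) = false := by
        rw [← Bool.not_eq_true, Nat.beq_eq]; exact h
      rw [this]; rfl
  | [] => rfl
  | [_] => rfl
  | [_, _] => rfl
  | [_, _, _] => rfl
  | _ :: _ :: _ :: _ :: _ :: _ => rfl

/-! enumeration of words -/
def wl : ℕ → ℕ → List (List (Fin 4))
  | 0, 0 => [[]]
  | 0, _ + 1 => []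
  | m + 1, n => [0, 1, 2, 3].flatMap fun j : Fin 4 =>
      bif Nat.ble j.1 n then (wl m (n - j.1)).map (fun w => j :: w) else []

lemma mem_wl (m n : ℕ) (w : List (Fin 4)) : w ∈ wl m n ↔ w.length = m ∧ lsum w = n := by
  induction m generalizing n w with
  | zero =>
    cases n with
    | zero =>
      simp only [wl, List.mem_singleton, List.length_eq_zero_iff]
      exact ⟨fun h => ⟨h, by subst h; rfl⟩, fun h => h.1⟩
    | succ n =>
      simp only [wl, List.length_eq_zero_iff]
      constructor
      · intro h; simp at h
      · rintro ⟨rfl, h⟩; simp [lsum] at h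
  | succ m ih =>
    rw [wl, List.mem_flatMap]
    have h4 : ∀ j : Fin 4, j ∈ ([0, 1, 2, 3] : List (Fin 4)) := by decide
    constructor
    · rintro ⟨j, -, h⟩
      by_cases hj : j.1 ≤ n
      · rw [Nat.ble_eq_true_of_le hj, cond_true, List.mem_map] at h
        obtain ⟨v, hv, rfl⟩ := h
        rw [ih] at hv
        rw [lsum_cons, List.length_cons, hv.1, hv.2]
        exact ⟨rfl, by omega⟩
      · have : Nat.ble j.1 n = false := by
          rw [← Bool.not_eq_true, Nat.ble_eq]; exact hj
        rw [this] at h; simp at h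
    · rintro ⟨h1, h2⟩
      cases w with
      | nil => simp at h1
      | cons j w =>
        rw [lsum_cons] at h2
        refine ⟨j, h4 j, ?_⟩
        rw [Nat.ble_eq_true_of_le (by omega), cond_true, List.mem_map]
        refine ⟨w, (ih _ _).2 ⟨by simpa using h1, by omega⟩, rfl⟩

lemma nodup_wl (m n : ℕ) : (wl m n).Nodup := by
  induction m generalizing n with
  | zero => cases n <;> simp [wl]
  | succ m ih =>
    rw [wl, List.nodup_flatMap]
    constructor
    · intro j _
      cases Nat.ble j.1 n
      · simp
      · exact (ih _).map (fun a b h => by simpa using h)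
    · refine List.Pairwise.imp_of_mem (R := (· ≠ ·)) ?_ (by decide)
      intro a b _ _ hab
      show List.Disjoint _ _
      intro w h1 h2
      have key : ∀ j : Fin 4, w ∈ (bif Nat.ble j.1 n then (wl m (n - j.1)).map (fun w => j :: w) else []) →
          w.head? = some j := by
        intro j hj
        cases hh : Nat.ble j.1 n <;> rw [hh] at hj
        · simp at hj
        · obtain ⟨v, -, rfl⟩ := List.mem_map.1 hj
          rfl
      have e := (key a h1).symm.trans (key b h2)
      exact hab (by simpa using e)

/-! dimension of the free part -/
abbrev Wi (n : ℕ) := {w // w ∈ (wl 7 n).toFinset}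

lemma wd_li : LinearIndependent ℚ wd := by
  rw [linearIndependent_iff']
  intro s g hg i hi
  have := congrArg (co i) hg
  simpa [co_wd, hi] using this

lemma TT_range (n) : TT 7 n = Submodule.span ℚ (Set.range fun w : Wi n => wd w.1) := by
  rw [TT]
  congr 1
  ext z
  constructor
  · rintro ⟨w, ⟨h1, h2⟩, rfl⟩
    exact ⟨⟨w, by rw [List.mem_toFinset, mem_wl]; exact ⟨h1, h2⟩⟩, rfl⟩
  · rintro ⟨⟨w, hw⟩, rfl⟩
    rw [List.mem_toFinset, mem_wl] at hw
    exact ⟨w, hw, rfl⟩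

def bW (n : ℕ) : Module.Basis (Wi n) ℚ (TT 7 n) :=
  (Module.Basis.span (wd_li.comp (fun w : Wi n => w.1) Subtype.val_injective)).map
    (LinearEquiv.ofEq _ _ (TT_range n).symm)

lemma bW_coe (n) (w : Wi n) : ((bW n w : TT 7 n) : KT) = wd w.1 := by
  simp [bW, Module.Basis.span_apply]

lemma bW_repr (n) (w : Wi n) (x : TT 7 n) : (bW n).repr x w = co w.1 (x : KT) := by
  have : (bW n).coord w = (co w.1) ∘ₗ (TT 7 n).subtype := by
    apply (bW n).ext
    intro v
    rw [Module.Basis.coord_apply, Module.Basis.repr_self, LinearMap.comp_apply,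
      Submodule.subtype_apply, bW_coe, co_wd, Finsupp.single_apply]
    by_cases h : v = w
    · simp [h]
    · rw [if_neg h, if_neg (fun e => h (Subtype.ext e))]
  exact LinearMap.congr_fun this x

instance finTT (n) : FiniteDimensional ℚ (TT 7 n) := Module.Basis.finiteDimensional_of_finite (bW n)

instance finRn (n) : FiniteDimensional ℚ (Rn n) := by unfold Rn; infer_instance

/-- normalised Dynkin operator -/
def pR (n : ℕ) : Module.End ℚ (TT 7 n) :=
  (1 / 7 : ℚ) • (Dy xx).restrict (fun _ hx => Dy_TT hx)

lemma pR_coe (n) (x : TT 7 n) : ((pR n x : TT 7 n) : KT) = (1 / 7 : ℚ) • Dy xx (x : KT) := rfl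

lemma pR_idem (n) : IsIdempotentElem (pR n) := by
  rw [IsIdempotentElem]
  ext x
  rw [Module.End.mul_apply, pR_coe, pR_coe, map_smul, Dy_Dy xx _ 7 (TT_len x.2), smul_smul, smul_smul]
  norm_num

lemma pR_range (n) : (LinearMap.range (pR n)).map (TT 7 n).subtype = Rn n := by
  rw [Rn]
  ext z
  constructor
  · rintro ⟨_, ⟨x, rfl⟩, rfl⟩
    refine ⟨(1 / 7 : ℚ) • (x : KT), Submodule.smul_mem _ _ x.2, ?_⟩
    rw [map_smul]; rfl
  · rintro ⟨a, ha, rfl⟩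
    refine ⟨_, ⟨(7 : ℚ) • ⟨a, ha⟩, rfl⟩, ?_⟩
    rw [Submodule.subtype_apply, pR_coe]
    simp

def trc (n : ℕ) : ℤ := ((wl 7 n).map fun w => cW w w).sum

lemma idem_trace {V : Type*} [AddCommGroup V] [Module ℚ V] [FiniteDimensional ℚ V]
    (p : Module.End ℚ V) (hp : IsIdempotentElem p) :
    LinearMap.trace ℚ V p = (Module.finrank ℚ (LinearMap.range p) : ℚ) :=
  (LinearMap.IsIdempotentElem.isProj_range p hp).trace

lemma finrank_Rn (n) : (Module.finrank ℚ (Rn n) : ℚ) * 7 = trc n := by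
  have h1 : Module.finrank ℚ (Rn n) = Module.finrank ℚ (LinearMap.range (pR n)) := by
    rw [← pR_range]
    exact LinearEquiv.finrank_eq (Submodule.equivSubtypeMap _ _).symm
  have h2 := idem_trace (pR n) (pR_idem n)
  rw [h1, ← h2, LinearMap.trace_eq_matrix_trace ℚ (bW n), Matrix.trace]
  have h3 : ∀ w : Wi n, (LinearMap.toMatrix (bW n) (bW n) (pR n)).diag w = (1 / 7 : ℚ) * (cW w.1 w.1 : ℚ) := by
    intro w
    rw [Matrix.diag_apply, LinearMap.toMatrix_apply, bW_repr, pR_coe, bW_coe, map_smul, Dy_wd, co_DW]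
    rfl
  rw [Finset.sum_congr rfl (fun w _ => h3 w), ← Finset.mul_sum, Finset.sum_coe_sort _ (fun w => (cW w w : ℚ)),
    List.sum_toFinset _ (nodup_wl 7 n), trc, Int.cast_list_sum, List.map_map]
  simp only [Function.comp_def]
  ring

/-! elimination modulo a prime -/
def comb (p a b : ℕ) : List ℕ → List ℕ → List ℕ
  | [], s => s.map fun y => (a * y) % p
  | x :: r, s => ((a * s.headD 0 + (p - b % p) * x) % p) :: comb p a b r s.tail

def chk (p : ℕ) : ℕ → List (List ℕ) → Bool
  | _, [] => true
  | 0, _ :: _ => false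
  | k + 1, row :: rest => bif Nat.beq (row.headD 0 % p) 0 then false else
      chk p k (rest.map fun s => comb p (row.headD 0) (s.headD 0) row.tail s.tail)

lemma comb_getD (p a b : ℕ) (hp : 0 < p) (r s : List ℕ) (j : ℕ) :
    (((comb p a b r s).getD j 0 : ℕ) : ZMod p) = (a : ZMod p) * (s.getD j 0 : ℕ) - (b : ZMod p) * (r.getD j 0 : ℕ) := by
  induction r generalizing s j with
  | nil =>
    rw [comb]
    simp only [List.getD_nil, Nat.cast_zero, mul_zero, sub_zero]
    by_cases h : j < s.length
    · rw [List.getD_eq_getElem _ _ (by simpa using h), List.getD_eq_getElem _ _ h]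
      simp
    · rw [List.getD_eq_default _ _ (by simpa using h), List.getD_eq_default _ _ (by simpa using h)]
      simp
  | cons x r ih =>
    rw [comb]
    cases j with
    | zero =>
      have hb : b % p ≤ p := (Nat.mod_lt _ hp).le
      cases s <;> simp [Nat.cast_sub hb] <;> ring
    | succ j =>
      rw [List.getD_cons_succ, ih, List.getD_cons_succ]
      cases s <;> simp

lemma chk_ok (p : ℕ) [Fact p.Prime] (k : ℕ) (L : List (List ℕ)) (h : chk p k L = true)
    (c : ℕ → ZMod p)
    (hc : ∀ j, ∑ i ∈ Finset.range L.length, c i * (((L.getD i []).getD j 0 : ℕ) : ZMod p) = 0) :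
    ∀ i < L.length, c i = 0 := by
  induction k generalizing L c with
  | zero =>
    cases L with
    | nil => intro i hi; simp at hi
    | cons row rest => simp [chk] at h
  | succ k ih =>
    cases L with
    | nil => intro i hi; simp at hi
    | cons row rest =>
      have hp : 0 < p := (Fact.out : p.Prime).pos
      rw [chk] at h
      have ha : (row.headD 0 : ZMod p) ≠ 0 := by
        intro h0
        rw [ZMod.natCast_eq_zero_iff] at h0
        have : Nat.beq (row.headD 0 % p) 0 = true := by
          rw [Nat.beq_eq]; exact Nat.mod_eq_zero_of_dvd h0
        rw [this] at h
        simp at h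
      have h' : chk p k (rest.map fun s => comb p (row.headD 0) (s.headD 0) row.tail s.tail) = true := by
        cases hh : Nat.beq (row.headD 0 % p) 0 <;> rw [hh] at h
        · exact h
        · simp at h
      have hhead : ∀ l : List ℕ, l.headD 0 = l.getD 0 0 := by intro l; cases l <;> rfl
      have htail : ∀ (l : List ℕ) j, l.tail.getD j 0 = l.getD (j + 1) 0 := by
        intro l j; cases l <;> simp
      have hc' : ∀ j, (∑ i ∈ Finset.range rest.length, c (i + 1) * (((rest.getD i []).getD j 0 : ℕ) : ZMod p))
          + c 0 * ((row.getD j 0 : ℕ) : ZMod p) = 0 := by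
        intro j
        have := hc j
        rw [List.length_cons, Finset.sum_range_succ'] at this
        exact this
      have hz := ih _ h' (fun i => c (i + 1)) ?_
      · have h0 := hc' 0
        rw [Finset.sum_eq_zero, zero_add, ← hhead] at h0
        · intro i hi
          cases i with
          | zero => exact (mul_eq_zero.1 h0).resolve_right ha
          | succ i => exact hz i (by simpa using hi)
        · intro i hi
          have := hz i (by simpa using hi)
          rw [this, zero_mul]
      · intro j
        rw [List.length_map]
        have e : ∀ i ∈ Finset.range rest.length,
            c (i + 1) * ((((rest.map fun s => comb p (row.headD 0) (s.headD 0) row.tail s.tail).getD i []).getD j 0 : ℕ) : ZMod p)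
            = (row.getD 0 0 : ℕ) * (c (i + 1) * (((rest.getD i []).getD (j + 1) 0 : ℕ) : ZMod p))
              - (row.getD (j + 1) 0 : ℕ) * (c (i + 1) * (((rest.getD i []).getD 0 0 : ℕ) : ZMod p)) := by
          intro i hi
          have hi' : i < rest.length := by simpa using hi
          rw [List.getD_eq_getElem _ [] (by simpa using hi'), List.getElem_map, comb_getD p _ _ hp,
            List.getD_eq_getElem _ [] hi']
          simp only [hhead, htail]
          ring
        rw [Finset.sum_congr rfl e, Finset.sum_sub_distrib, ← Finset.mul_sum, ← Finset.mul_sum]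
        linear_combination (row.getD 0 0 : ZMod p) * hc' (j + 1) - (row.getD (j + 1) 0 : ZMod p) * hc' 0

/-! dimension of the relation part -/
def aw : ℕ → List (List (Fin 4))
  | 0 => [[]]
  | m + 1 => [0, 1, 2, 3].flatMap fun j : Fin 4 => (aw m).map (fun w => j :: w)

lemma mem_aw (m : ℕ) (w : List (Fin 4)) : w ∈ aw m ↔ w.length = m := by
  induction m generalizing w with
  | zero => simp [aw]
  | succ m ih =>
    have h4 : ∀ j : Fin 4, j ∈ ([0, 1, 2, 3] : List (Fin 4)) := by decide
    rw [aw, List.mem_flatMap]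
    constructor
    · rintro ⟨j, -, h⟩
      obtain ⟨v, hv, rfl⟩ := List.mem_map.1 h
      simp [(ih v).1 hv]
    · intro h
      cases w with
      | nil => simp at h
      | cons j w => exact ⟨j, h4 j, List.mem_map.2 ⟨w, (ih w).2 (by simpa using h), rfl⟩⟩

def lsm : List (Fin 4) → ℕ
  | [] => 0
  | j :: w => j.1 + lsm w
lemma lsm_eq (w) : lsm w = lsum w := by
  induction w with
  | nil => rfl
  | cons j w ih => rw [lsm, lsum_cons, ih]

def SL (n : ℕ) : List (List (Fin 4)) :=
  (aw 3).filter fun u => Nat.ble (lsm u + 1) n && Nat.ble n (lsm u + 11)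

lemma mem_SL (n u) : u ∈ SL n ↔ u.length = 3 ∧ lsum u + 1 ≤ n ∧ n ≤ lsum u + 11 := by
  rw [SL, List.mem_filter, mem_aw, Bool.and_eq_true, Nat.ble_eq, Nat.ble_eq, lsm_eq]

def kf (n : ℕ) (u : List (Fin 4)) : ℕ := n - 1 - lsm u
def cz (n : ℕ) (u w : List (Fin 4)) : ℤ := cfr (bs (kf n u)) u w
def zz (n : ℕ) (u : List (Fin 4)) : KT :=
  rho xx (wd u) (((kf n u).factorial : ℚ)⁻¹ • rr (kf n u))

lemma co_zz (n u w) : co w (zz n u) = (cz n u w : ℚ) := by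
  apply co_rho
  intro w
  rw [map_smul, co_rr, smul_eq_mul, ← mul_assoc, inv_mul_cancel₀, one_mul]
  exact_mod_cast Nat.factorial_ne_zero _

lemma Jn_eq (n) : Jn n = Submodule.span ℚ (Set.range fun i : Fin (SL n).length => zz n ((SL n).get i)) := by
  rw [Jn]
  apply le_antisymm
  · rw [Submodule.span_le]
    rintro _ ⟨u, k, hu, hk, rfl⟩
    by_cases h11 : 11 ≤ k
    · rw [rr_zero h11, map_zero]; exact zero_mem _
    · have hm : u ∈ SL n := (mem_SL n u).2 ⟨hu, by omega, by omega⟩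
      obtain ⟨i, hi⟩ := List.mem_iff_get.1 hm
      have hkf : kf n u = k := by rw [kf, lsm_eq]; omega
      have : rho xx (wd u) (rr k) = (k.factorial : ℚ) • zz n u := by
        rw [zz, hkf, map_smul, smul_smul, mul_inv_cancel₀, one_smul]
        exact_mod_cast Nat.factorial_ne_zero _
      rw [this, ← hi]
      exact Submodule.smul_mem _ _ (Submodule.subset_span ⟨i, rfl⟩)
  · rw [Submodule.span_le]
    rintro _ ⟨i, rfl⟩
    have hm := (mem_SL n _).1 (List.get_mem (SL n) i)
    show zz n ((SL n).get i) ∈ _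
    rw [zz, map_smul]
    refine Submodule.smul_mem _ _ (Submodule.subset_span ⟨_, _, hm.1, ?_, rfl⟩)
    rw [kf, lsm_eq]; omega

def mtx (n : ℕ) (cols : List (List (Fin 4))) : List (List ℕ) :=
  (SL n).map fun u => cols.map fun w => (cz n u w % 101).toNat

lemma z_li (n : ℕ) (cols : List (List (Fin 4))) (hl : cols.length = (SL n).length)
    (h : chk 101 cols.length (mtx n cols) = true) :
    LinearIndependent ℚ (fun i : Fin (SL n).length => zz n ((SL n).get i)) := by
  have : Fact (Nat.Prime 101) := ⟨by norm_num⟩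
  let M : Matrix (Fin (SL n).length) (Fin (SL n).length) ℤ :=
    fun i j => cz n ((SL n).get i) (cols.get (j.cast hl.symm))
  have hmt : (mtx n cols).length = (SL n).length := by simp [mtx]
  have hM : (M.map (Int.castRingHom (ZMod 101))).det ≠ 0 := by
    intro h0
    obtain ⟨v, hv0, hv⟩ := Matrix.exists_vecMul_eq_zero_iff.2 h0
    apply hv0
    let c : ℕ → ZMod 101 := fun i => if hi : i < (SL n).length then v ⟨i, hi⟩ else 0
    have hc := chk_ok 101 _ _ h c ?_
    · ext i
      have := hc i.1 (by rw [hmt]; exact i.2)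
      simpa [c] using this
    · intro j
      rw [hmt, ← Fin.sum_univ_eq_sum_range
        (fun i => c i * ((((mtx n cols).getD i []).getD j 0 : ℕ) : ZMod 101))]
      by_cases hj : j < (SL n).length
      · have := congrFun hv ⟨j, hj⟩
        rw [Matrix.vecMul, dotProduct] at this
        refine Eq.trans ?_ this
        refine Finset.sum_congr rfl fun i _ => ?_
        have e1 : c i.1 = v i := by simp [c]
        rw [e1, Matrix.map_apply]
        congr 1
        rw [List.getD_eq_getElem _ [] (by rw [hmt]; exact i.2)]
        simp only [mtx, List.getElem_map]
        rw [List.getD_eq_getElem _ 0 (by rw [List.length_map, hl]; exact hj), List.getElem_map]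
        have hx : ∀ x : ℤ, (((x % 101).toNat : ℕ) : ZMod 101) = (x : ZMod 101) := by
          intro x
          rw [← Int.cast_natCast, Int.toNat_of_nonneg (Int.emod_nonneg _ (by norm_num))]
          exact (ZMod.intCast_mod x 101)
        rw [hx]
        rfl
      · refine Finset.sum_eq_zero fun i _ => ?_
        rw [List.getD_eq_getElem _ [] (by rw [hmt]; exact i.2)]
        simp only [mtx, List.getElem_map]
        rw [List.getD_eq_default _ 0 (by rw [List.length_map, hl]; omega)]
        simp
  have hZ : M.det ≠ 0 := by
    intro h0
    apply hM
    have := RingHom.map_det (Int.castRingHom (ZMod 101)) M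
    rw [h0, map_zero] at this
    exact this.symm
  have hQ : (M.map (Int.castRingHom ℚ)).det ≠ 0 := by
    have := RingHom.map_det (Int.castRingHom ℚ) M
    intro h0
    apply hZ
    have e : (Int.castRingHom ℚ) M.det = 0 := this.trans h0
    simpa using e
  rw [Fintype.linearIndependent_iff]
  intro g hg
  have : Matrix.vecMul g (M.map (Int.castRingHom ℚ)) = 0 := by
    ext j
    have := congrArg (co (cols.get (j.cast hl.symm))) hg
    rw [map_sum, map_zero] at this
    rw [Matrix.vecMul, dotProduct, Pi.zero_apply, ← this]
    refine Finset.sum_congr rfl fun i _ => ?_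
    rw [map_smul, co_zz]
    rfl
  have := Matrix.eq_zero_of_vecMul_eq_zero hQ this
  intro i
  rw [this]; rfl

lemma finrank_Jn (n : ℕ) (cols : List (List (Fin 4))) (hl : cols.length = (SL n).length)
    (h : chk 101 cols.length (mtx n cols) = true) : Module.finrank ℚ (Jn n) = cols.length := by
  rw [Jn_eq, finrank_span_eq_card (z_li n cols hl h), Fintype.card_fin, hl]

/-! evaluation-friendly versions of the two computations -/
def stn {α : Type} (x : ℕ) (f : ℕ → α) : α := Nat.rec (f 0) (fun n _ => f (Nat.succ n)) x
lemma stn_eq {α : Type} (x : ℕ) (f : ℕ → α) : stn x f = f x := by cases x <;> rfl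

def combS (p a c : ℕ) (r : List ℕ) : List ℕ → List ℕ :=
  List.rec (fun s => s.map fun y => Nat.mod (Nat.mul a y) p)
    (fun x _ ih s => List.rec (Nat.mod (Nat.mul c x) p :: ih [])
      (fun y t _ => stn (Nat.mod (Nat.add (Nat.mul a y) (Nat.mul c x)) p) (fun v => v :: ih t)) s) r

lemma combS_eq (p a b : ℕ) (r s : List ℕ) : combS p a (p - b % p) r s = comb p a b r s := by
  induction r generalizing s with
  | nil => rfl
  | cons x r ih =>
    cases s with
    | nil =>
      rw [comb]
      have : combS p a (p - b % p) (x :: r) [] =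
        ((p - b % p) * x) % p :: combS p a (p - b % p) r [] := rfl
      rw [this, ih]; simp
    | cons y s =>
      have : combS p a (p - b % p) (x :: r) (y :: s) =
        stn ((a * y + (p - b % p) * x) % p) (fun v => v :: combS p a (p - b % p) r s) := rfl
      rw [this, stn_eq, ih, comb]; rfl

def fcL (l : List ℕ) : (List ℕ → Bool) → Bool :=
  List.rec (fun k => k []) (fun x _ ih k => stn x (fun v => ih (fun t => k (v :: t)))) l

lemma fcL_eq (l : List ℕ) (k : List ℕ → Bool) : fcL l k = k l := by
  induction l generalizing k with
  | nil => rfl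
  | cons x l ih =>
    have : fcL (x :: l) k = stn x (fun v => fcL l (fun t => k (v :: t))) := rfl
    rw [this, stn_eq, ih]

def chkS (p : ℕ) : ℕ → List (List ℕ) → Bool
  | _, [] => true
  | 0, _ :: _ => false
  | k + 1, row :: rest => fcL row fun row => stn (row.headD 0) fun a =>
      bif Nat.beq (Nat.mod a p) 0 then false else
      chkS p k (rest.map fun s => stn (Nat.sub p (Nat.mod (s.headD 0) p)) fun c =>
        combS p a c row.tail s.tail)

lemma chkS_eq (p k : ℕ) (L : List (List ℕ)) : chkS p k L = chk p k L := by
  induction k generalizing L with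
  | zero => cases L <;> rfl
  | succ k ih =>
    cases L with
    | nil => rfl
    | cons row rest =>
      rw [chkS, fcL_eq, stn_eq, chk, ih]
      congr 3
      funext s
      rw [stn_eq]
      exact combS_eq _ _ _ _ _

def cWS (u : List (Fin 4)) : List (Fin 4) → ℤ :=
  List.rec (fun _ => Int.ofNat 0) (fun j u ih w => List.rec
    (cond (hdb j w) (List.rec (Int.ofNat 0) (fun _ t _ => List.rec (Int.ofNat 1)
      (fun _ _ _ => Int.ofNat 0) t) w) (Int.ofNat 0))
    (fun _ _ _ => Int.sub (cond (hdb j w) (ih w.tail) (Int.ofNat 0))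
      (cond (lsb j w) (ih w.dropLast) (Int.ofNat 0))) u) u

lemma cWS_eq (u w) : cWS u w = cW u w := by
  induction u generalizing w with
  | nil => rfl
  | cons j u ih =>
    cases u with
    | nil =>
      match w with
      | [] => rfl
      | [_] => rfl
      | _ :: _ :: _ => rfl
    | cons k u =>
      rw [cW, ← ih, ← ih]; rfl

def sw : ℕ → ℕ → (List (Fin 4) → ℤ) → ℤ
  | 0, 0, g => g []
  | 0, _ + 1, _ => Int.ofNat 0
  | m + 1, n, g => (sw m n fun w => g (⟨0, by decide⟩ :: w)) +
    ((bif Nat.ble 1 n then (sw m (n - 1) fun w => g (⟨1, by decide⟩ :: w)) else Int.ofNat 0) +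
    ((bif Nat.ble 2 n then (sw m (n - 2) fun w => g (⟨2, by decide⟩ :: w)) else Int.ofNat 0) +
    (bif Nat.ble 3 n then (sw m (n - 3) fun w => g (⟨3, by decide⟩ :: w)) else Int.ofNat 0)))

lemma sw_eq (m n : ℕ) (g) : sw m n g = ((wl m n).map g).sum := by
  induction m generalizing n g with
  | zero => cases n <;> simp [sw, wl]
  | succ m ih =>
    have key : ∀ j : Fin 4, (((bif Nat.ble j.1 n then (wl m (n - j.1)).map (fun w => j :: w) else [])).map g).sum
        = bif Nat.ble j.1 n then sw m (n - j.1) (fun w => g (j :: w)) else Int.ofNat 0 := by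
      intro j
      cases Nat.ble j.1 n
      · rfl
      · rw [cond_true, cond_true, ih, List.map_map]; rfl
    rw [wl]
    simp only [List.flatMap_cons, List.flatMap_nil, List.map_append, List.sum_append, key,
      List.map_nil, List.sum_nil, add_zero]
    rfl

lemma trc_eq (n) : trc n = sw 7 n (fun w => cWS w w) := by
  simp only [sw_eq, cWS_eq, trc]

/-- decode a word from base four -/
def dec : ℕ → ℕ → List (Fin 4)
  | 0, _ => []
  | m + 1, x => Fin.ofNat 4 (x / 4 ^ m) :: dec m x

lemma rootMult_eq (n m : ℕ) (cs : List ℕ) (h1 : Nat.beq cs.length (SL n).length = true)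
    (h2 : chkS 101 cs.length (mtx n (cs.map (dec 7))) = true)
    (h3 : sw 7 n (fun w => cWS w w) = 7 * (m + cs.length)) : rootMult A2hyp ![7, (n : ℤ)] = m := by
  have h4 := finrank_Rn n
  rw [trc_eq, h3] at h4
  rw [Nat.beq_eq] at h1
  have h5 := finrank_Jn n (cs.map (dec 7)) (by rw [List.length_map, h1]) (by rw [List.length_map]; rw [← chkS_eq]; exact h2)
  have h6 := rootMult_add n
  rw [h5, List.length_map] at h6
  rw [← h6] at h4
  push_cast at h4
  have : (rootMult A2hyp ![7, (n : ℤ)] : ℚ) = m := by linarith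
  exact_mod_cast this

/-- pivot words in degree (7,3) -/
def cs3 : List ℕ :=
  [3, 9, 6, 33, 21, 18, 129, 81, 69, 66]

lemma mult_3 : rootMult A2hyp ![7, 3] = 2 :=
  rootMult_eq 3 2 cs3 (by decide +kernel) (by decide +kernel) (by decide +kernel)

/-- pivot words in degree (7,4) -/
def cs4 : List ℕ :=
  [10, 13, 19, 7, 49, 37, 25, 34, 22, 67, 193, 145, 97, 133, 85, 73, 130, 82, 70, 262]

lemma mult_4 : rootMult A2hyp ![7, 4] = 9 :=
  rootMult_eq 4 9 cs4 (by decide +kernel) (by decide +kernel) (by decide +kernel)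

/-- pivot words in degree (7,5) -/
def cs5 : List ℕ :=
  [11, 41, 14, 26, 161, 53, 77, 29, 50, 38, 71, 35, 23, 266, 209, 305, 113, 197, 149, 101,
    137, 89, 269, 194, 146, 98, 134, 86, 74, 131, 83, 263]

lemma mult_5 : rootMult A2hyp ![7, 5] = 27 :=
  rootMult_eq 5 27 cs5 (by decide +kernel) (by decide +kernel) (by decide +kernel)

/-- pivot words in degree (7,6) -/
def cs6 : List ℕ :=
  [15, 45, 42, 27, 177, 165, 57, 105, 162, 54, 78, 30, 51, 39, 90, 267, 657, 225, 417, 645,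
    213, 309, 117, 201, 153, 285, 141, 93, 522, 210, 306, 114, 198, 150, 102, 138, 279, 270,
    195, 147, 99, 135, 87, 75]

lemma mult_6 : rootMult A2hyp ![7, 6] = 60 :=
  rootMult_eq 6 60 cs6 (by decide +kernel) (by decide +kernel) (by decide +kernel)

/-- pivot words in degree (7,7) -/
def cs7 : List ℕ :=
  [31, 61, 46, 43, 241, 181, 169, 109, 178, 166, 58, 106, 163, 55, 79, 91, 271, 721, 673,
    433, 709, 661, 229, 421, 649, 217, 313, 121, 205, 157, 361, 523, 658, 226, 418, 646,
    214, 310, 118, 202, 154, 286, 142, 94, 643, 211, 307, 115, 199, 151, 103, 139, 295, 298]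

lemma mult_7 : rootMult A2hyp ![7, 7] = 107 :=
  rootMult_eq 7 107 cs7 (by decide +kernel) (by decide +kernel) (by decide +kernel)

/-- pivot words in degree (7,8) -/
def cs8 : List ℕ :=
  [59, 125, 62, 47, 287, 245, 185, 173, 242, 182, 170, 110, 179, 167, 95, 107, 497, 977,
    737, 689, 965, 725, 677, 437, 713, 665, 233, 425, 653, 221, 317, 365, 527, 722, 674,
    434, 710, 662, 230, 422, 650, 218, 314, 122, 206, 158, 362, 707, 659, 227, 419, 647,
    215, 311, 119, 203, 155, 299, 143, 302]

lemma mult_8 : rootMult A2hyp ![7, 8] = 162 :=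
  rootMult_eq 8 162 cs8 (by decide +kernel) (by decide +kernel) (by decide +kernel)

/-- pivot words in degree (7,9) -/
def cs9 : List ℕ :=
  [63, 237, 126, 111, 315, 501, 249, 189, 498, 246, 186, 174, 243, 183, 171, 123, 945,
    1149, 993, 753, 1311, 981, 741, 693, 969, 729, 681, 441, 717, 669, 381, 429, 543, 978,
    738, 690, 966, 726, 678, 438, 714, 666, 234, 426, 654, 222, 318, 366, 783, 723, 675,
    435, 711, 663, 231, 423, 651, 219, 351, 303, 207, 159, 363]

lemma mult_9 : rootMult A2hyp ![7, 9] = 211 :=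
  rootMult_eq 9 211 cs9 (by decide +kernel) (by decide +kernel) (by decide +kernel)

/-- pivot words in degree (7,10) -/
def cs10 : List ℕ :=
  [127, 253, 238, 187, 319, 949, 505, 445, 571, 502, 250, 190, 499, 247, 235, 175, 1009,
    1261, 1150, 1135, 1339, 2005, 997, 757, 1993, 985, 745, 697, 973, 733, 685, 493, 946,
    2002, 994, 754, 1567, 982, 742, 694, 970, 730, 682, 442, 718, 670, 382, 430, 799, 979,
    739, 691, 967, 727, 679, 439, 715, 667, 367, 427, 655, 223, 379, 415]

lemma mult_10 : rootMult A2hyp ![7, 10] = 240 :=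
  rootMult_eq 10 240 cs10 (by decide +kernel) (by decide +kernel) (by decide +kernel)

/-- pivot words in degree (7,11) -/
def cs11 : List ℕ :=
  [191, 383, 254, 239, 509, 1013, 953, 749, 575, 950, 506, 446, 827, 503, 251, 431, 1151,
    1277, 1262, 1211, 1343, 3797, 2021, 1781, 2285, 2009, 1001, 761, 1997, 989, 941, 701,
    1010, 2363, 2018, 1778, 1595, 2006, 998, 758, 1994, 986, 746, 698, 974, 734, 686, 494,
    947, 2003, 995, 755, 1823, 983, 743, 695, 971, 731, 683, 443, 719, 671, 479, 491]

lemma mult_11 : rootMult A2hyp ![7, 11] = 240 :=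
  rootMult_eq 11 240 cs11 (by decide +kernel) (by decide +kernel) (by decide +kernel)

/-- pivot words in degree (7,12) -/
def cs12 : List ℕ :=
  [447, 510, 255, 765, 1407, 1017, 957, 639, 1014, 954, 750, 831, 951, 507, 699, 1215,
    1533, 1278, 1263, 2037, 4053, 3813, 2997, 2301, 3801, 2025, 1785, 3309, 2013, 1005,
    1725, 2034, 2367, 2286, 2235, 1599, 3798, 2022, 1782, 2619, 2010, 1002, 762, 1998, 990,
    942, 702, 1011, 3387, 2019, 1779, 1851, 2007, 999, 759, 1995, 987, 747, 939, 975, 735,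
    687, 495]

lemma mult_12 : rootMult A2hyp ![7, 12] = 211 :=
  rootMult_eq 12 211 cs12 (by decide +kernel) (by decide +kernel) (by decide +kernel)

/-- **Root multiplicities in the `m = 7` row of the simplest rank-2 hyperbolic Kac–Moody
algebra.** -/
theorem rank2_row7_mults :
    rootMult A2hyp ![7, 3] = 2 ∧
    rootMult A2hyp ![7, 4] = 9 ∧
    rootMult A2hyp ![7, 5] = 27 ∧
    rootMult A2hyp ![7, 6] = 60 ∧
    rootMult A2hyp ![7, 7] = 107 ∧
    rootMult A2hyp ![7, 8] = 162 ∧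
    rootMult A2hyp ![7, 9] = 211 ∧
    rootMult A2hyp ![7, 10] = 240 ∧
    rootMult A2hyp ![7, 11] = 240 ∧
    rootMult A2hyp ![7, 12] = 211 := by
  exact ⟨mult_3, mult_4, mult_5, mult_6, mult_7, mult_8, mult_9, mult_10, mult_11, mult_12⟩
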